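/- arXiv:2407.10708 — 4 statements merged into one kernel-verified Lean document; each statement's English description precedes it below -/
import Mathlib

section
/- Fix integers q ≥ 1 and γ with 0 ≤ γ ≤ q-1, reals u > 0 and κ ∈ (0,∞), and for each integer d ≥ 2 a real K(d) < 0. If lim_{d→∞} (-K(d))·d = κ, then lim_{d→∞} P(d,q,γ,K(d),u) = ρ(u,q,γ,κ), where ρ(u,q,γ,κ) := ω_{γ+1}·(2π)^{-(γ+1)/2}·u^{q+1}·κ^{(γ+1)/2}·(∫_0^u e^{κs²/2}·s^{q-γ-1} ds)^{-1} · ∫_0^1 r^{q-γ-1} ∫_0^{1/r} v^q·exp(-(1/2)·u²·κ·v²·(1-r²)) dv dr; moreover ρ(u,q,γ,κ) ∈ (0,1) (critical phase of the phase transition). -/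
open Real MeasureTheory Filter Asymptotics

/-- Surface area `ω_n = 2 π^{n/2} / Γ(n/2)` of the Euclidean unit sphere in `ℝ^n`. -/
noncomputable def omegaS (n : ℕ) : ℝ := 2 * Real.pi ^ ((n : ℝ) / 2) / Real.Gamma ((n : ℝ) / 2)

/-- The constant `D(d,q,γ)`. -/
noncomputable def Dconst (d q γ : ℕ) : ℝ :=
  omegaS (γ + 1) * omegaS (q - γ) * omegaS (d - q) / (omegaS (d - q + γ + 1) * omegaS (d - γ))

/-- `R_K(x)`, the Euclidean (Beltrami–Klein) radius of a hyperbolic ball of radius `x`. -/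
noncomputable def RK (K x : ℝ) : ℝ :=
  Real.sinh (Real.sqrt (-K) * x) /
    (Real.sqrt (-K) * Real.sqrt (1 + Real.sinh (Real.sqrt (-K) * x) ^ 2))

/-- `C_K(d,m,u)`, the invariant measure of the `m`-flats meeting the ball of radius `u`. -/
noncomputable def Cconst (K : ℝ) (d m : ℕ) (u : ℝ) : ℝ :=
  omegaS (d - m) * Real.sqrt (-K) ^ (-(d : ℝ) + (m : ℝ) + 1) *
    ∫ r in (0:ℝ)..u,
      Real.cosh (Real.sqrt (-K) * r) ^ m * Real.sinh (Real.sqrt (-K) * r) ^ (d - m - 1)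

/-- `P(d,q,γ,K,u)`, the hyperbolic intersection probability of the random flats `E` and `L`. -/
noncomputable def Pprob (d q γ : ℕ) (K u : ℝ) : ℝ :=
  Dconst d q γ * omegaS (d - γ) / Cconst K d (d - q + γ) u *
    ∫ r in (0:ℝ)..(1 / Real.sqrt (-K)),
      r ^ ((q : ℝ) - (γ : ℝ) - 1) *
        ∫ z in (0:ℝ)..(min 1 (RK K u / r)),
          z ^ q * (1 - z ^ 2) ^ (((d : ℝ) - (q : ℝ)) / 2 - 1) *
            (1 + K * r ^ 2 * z ^ 2) ^ (-((d : ℝ) + 1) / 2)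

/-- `F_{K,u}(δ)`, the distribution function of the distance of `E ∩ L` to the origin. -/
noncomputable def Fdist (d q γ : ℕ) (K u δ : ℝ) : ℝ :=
  Dconst d q γ * omegaS (d - γ) / Cconst K d (d - q + γ) u *
    ∫ r in (0:ℝ)..(RK K δ),
      r ^ ((q : ℝ) - (γ : ℝ) - 1) *
        ∫ z in (0:ℝ)..(min 1 (RK K u / r)),
          z ^ q * (1 - z ^ 2) ^ (((d : ℝ) - (q : ℝ)) / 2 - 1) *
            (1 + K * r ^ 2 * z ^ 2) ^ (-((d : ℝ) + 1) / 2)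

/-- `f_{d,q,γ,K}(δ)`, the density of the distance of `E ∩ L` to the origin. -/
noncomputable def fdens (d q γ : ℕ) (K u δ : ℝ) : ℝ :=
  Dconst d q γ * omegaS (d - γ) / Cconst K d (d - q + γ) u *
    (RK K δ ^ ((q : ℝ) - (γ : ℝ) - 1) / Real.cosh (Real.sqrt (-K) * δ) ^ 2) *
    ∫ z in (0:ℝ)..(min 1 (RK K u / RK K δ)),
      z ^ q * (1 - z ^ 2) ^ (((d : ℝ) - (q : ℝ)) / 2 - 1) *
        (1 + K * RK K δ ^ 2 * z ^ 2) ^ (-((d : ℝ) + 1) / 2)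

/-- The limiting constant `ρ(u,q,γ,κ)` in the critical phase. -/
noncomputable def rhoConst (u : ℝ) (q γ : ℕ) (κ : ℝ) : ℝ :=
  omegaS (γ + 1) * (2 * Real.pi) ^ (-((γ : ℝ) + 1) / 2) * u ^ (q + 1) *
    κ ^ (((γ : ℝ) + 1) / 2) *
    (∫ s in (0:ℝ)..u, Real.exp (κ * s ^ 2 / 2) * s ^ ((q : ℝ) - (γ : ℝ) - 1))⁻¹ *
    ∫ r in (0:ℝ)..1,
      r ^ ((q : ℝ) - (γ : ℝ) - 1) *
        ∫ v in (0:ℝ)..(1 / r),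
          v ^ q * Real.exp (-(1 / 2) * u ^ 2 * κ * v ^ 2 * (1 - r ^ 2))

/-!
The probability `P(d,q,γ,K,u)` equals `P(X ≤ Y)` for independent radii `X` and `Y` with beta-type
densities on `[0, T]` and `[0, 1]`, where `T = tanh (√(-K) u)`: the substitution `t = tanh r` turns
the normalising constant `C_K` into the mass of the density of `X`, and `t = r z` together with
Fubini's theorem turns the double integral over `(r, z)` into the integral of the product density
over `{x ≤ y}`. Rescaling `X` and `Y` by `T`, which does not affect the event `X ≤ Y`, and using
`T² d → u² κ`, the factors `(1 - T² x²) ^ (∓ d / 2)` converge to `exp (± u² κ x² / 2)`, and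
dominated convergence gives the limit. The same substitution identifies `ρ(u,q,γ,κ)` with `P(X ≤ Y)`
for the limiting densities. These are both positive on `(0, 1)`, so neither `X ≤ Y` nor `X > Y` is
negligible and `ρ` lies strictly between `0` and `1`.
-/

open Set Topology

section ProbLE

variable {f g : ℝ → ℝ}

/-- `P(X ≤ Y)` for independent random variables `X`, `Y` on `(0, ∞)` whose densities are
proportional to `f` and `g`. The normalisations are part of the quotient, so `f` and `g` need not
have mass one; the value is junk if one of them is not integrable or has mass zero. -/
noncomputable def probLE (f g : ℝ → ℝ) : ℝ :=
  (∫ y in Ioi (0 : ℝ), g y * ∫ x in (0 : ℝ)..y, f x) /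
    ((∫ x in Ioi (0 : ℝ), f x) * ∫ y in Ioi (0 : ℝ), g y)

lemma setIntegral_Ioi_pos_of_pos_on_Ioo {a b : ℝ} (hab : a < b) (hf : IntegrableOn f (Ioi a))
    (hf_nonneg : ∀ x ∈ Ioi a, 0 ≤ f x) (hf_pos : ∀ x ∈ Ioo a b, 0 < f x) :
    0 < ∫ x in Ioi a, f x := by
  rw [setIntegral_pos_iff_support_of_nonneg_ae
    (ae_restrict_of_forall_mem measurableSet_Ioi hf_nonneg) hf]
  calc 0 < volume (Ioo a b) := by simpa using hab
    _ ≤ volume (Function.support f ∩ Ioi a) :=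
      measure_mono fun x hx => ⟨(hf_pos x hx).ne', hx.1⟩

lemma norm_integral_zero_le_integral_Ioi (hf : IntegrableOn f (Ioi 0)) {y : ℝ} (hy : 0 ≤ y) :
    ‖∫ x in (0 : ℝ)..y, f x‖ ≤ ∫ x in Ioi (0 : ℝ), ‖f x‖ := by
  rw [intervalIntegral.integral_of_le hy]
  exact (norm_integral_le_integral_norm _).trans <| setIntegral_mono_set hf.norm
    (.of_forall fun _ => norm_nonneg _) Ioc_subset_Ioi_self.eventuallyLE

lemma aestronglyMeasurable_primitive_Ioi (hf : IntegrableOn f (Ioi 0)) :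
    AEStronglyMeasurable (fun y => ∫ x in (0 : ℝ)..y, f x) (volume.restrict (Ioi 0)) := by
  have hf_ind : Integrable ((Ioi 0).indicator f) := hf.integrable_indicator measurableSet_Ioi
  refine (intervalIntegral.continuous_primitive
    (fun _ _ => hf_ind.intervalIntegrable) 0).aestronglyMeasurable.congr ?_
  refine ae_restrict_of_forall_mem measurableSet_Ioi fun y hy => ?_
  simp only [intervalIntegral.integral_of_le (mem_Ioi.1 hy).le]
  exact setIntegral_congr_fun measurableSet_Ioc fun x hx => indicator_of_mem (mem_Ioi.2 hx.1) f

lemma integrableOn_mul_primitive (hf : IntegrableOn f (Ioi 0)) (hg : IntegrableOn g (Ioi 0)) :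
    IntegrableOn (fun y => g y * ∫ x in (0 : ℝ)..y, f x) (Ioi 0) :=
  Integrable.mul_bdd hg (aestronglyMeasurable_primitive_Ioi hf) <|
    ae_restrict_of_forall_mem measurableSet_Ioi fun _ hy =>
      norm_integral_zero_le_integral_Ioi hf (mem_Ioi.1 hy).le

lemma probLE_mem_Ioo {b : ℝ} (hb : 0 < b)
    (hf : IntegrableOn f (Ioi 0)) (hf_nonneg : ∀ x ∈ Ioi 0, 0 ≤ f x)
    (hf_pos : ∀ x ∈ Ioo 0 b, 0 < f x)
    (hg : IntegrableOn g (Ioi 0)) (hg_nonneg : ∀ y ∈ Ioi 0, 0 ≤ g y)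
    (hg_pos : ∀ y ∈ Ioo 0 b, 0 < g y) :
    probLE f g ∈ Ioo (0 : ℝ) 1 := by
  have hf_int := setIntegral_Ioi_pos_of_pos_on_Ioo hb hf hf_nonneg hf_pos
  have hg_int := setIntegral_Ioi_pos_of_pos_on_Ioo hb hg hg_nonneg hg_pos
  have hfi : ∀ y ∈ Ioi (0 : ℝ), IntervalIntegrable f volume 0 y := fun y hy =>
    (intervalIntegrable_iff_integrableOn_Ioc_of_le (mem_Ioi.1 hy).le).2
      (hf.mono_set Ioc_subset_Ioi_self)
  have head_nonneg : ∀ y ∈ Ioi (0 : ℝ), 0 ≤ ∫ x in (0 : ℝ)..y, f x := fun y hy => by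
    rw [intervalIntegral.integral_of_le (mem_Ioi.1 hy).le]
    exact setIntegral_nonneg measurableSet_Ioc fun x hx => hf_nonneg x hx.1
  have head_pos : ∀ y ∈ Ioo 0 b, 0 < ∫ x in (0 : ℝ)..y, f x := fun y hy =>
    intervalIntegral.intervalIntegral_pos_of_pos_on (hfi y hy.1)
      (fun x hx => hf_pos x ⟨hx.1, hx.2.trans hy.2⟩) hy.1
  have tail_eq : ∀ y ∈ Ioi (0 : ℝ),
      ∫ x in Ioi y, f x = (∫ x in Ioi 0, f x) - ∫ x in (0 : ℝ)..y, f x := fun y hy => by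
    rw [← intervalIntegral.integral_Ioi_sub_Ioi hf (mem_Ioi.1 hy).le, sub_sub_cancel]
  have tail_nonneg : ∀ y ∈ Ioi (0 : ℝ), 0 ≤ ∫ x in Ioi y, f x := fun y hy =>
    setIntegral_nonneg measurableSet_Ioi fun x hx => hf_nonneg x (mem_Ioi.1 hy |>.trans hx)
  have tail_pos : ∀ y ∈ Ioo 0 b, 0 < ∫ x in Ioi y, f x := fun y hy =>
    setIntegral_Ioi_pos_of_pos_on_Ioo hy.2 (hf.mono_set (Ioi_subset_Ioi hy.1.le))
      (fun x hx => hf_nonneg x (hy.1.trans hx)) fun x hx => hf_pos x ⟨hy.1.trans hx.1, hx.2⟩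
  have hnum := integrableOn_mul_primitive hf hg
  refine ⟨div_pos ?_ (by positivity), (div_lt_one (by positivity)).2 ?_⟩
  · exact setIntegral_Ioi_pos_of_pos_on_Ioo hb hnum
      (fun y hy => mul_nonneg (hg_nonneg y hy) (head_nonneg y hy))
      fun y hy => mul_pos (hg_pos y hy) (head_pos y hy)
  · rw [mul_comm, ← integral_mul_const, ← sub_pos, ← integral_sub (hg.mul_const _) hnum]
    refine setIntegral_Ioi_pos_of_pos_on_Ioo hb ((hg.mul_const _).sub hnum) (fun y hy => ?_)
      fun y hy => ?_
    · rw [← mul_sub, ← tail_eq y hy]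
      exact mul_nonneg (hg_nonneg y hy) (tail_nonneg y hy)
    · rw [← mul_sub, ← tail_eq y hy.1]
      exact mul_pos (hg_pos y hy) (tail_pos y hy)

lemma probLE_const_mul_comp_mul_left {c s t : ℝ} (hc : 0 < c) (hs : s ≠ 0) (ht : t ≠ 0) :
    probLE (fun x => s * f (c * x)) (fun y => t * g (c * y)) = probLE f g := by
  have hprim : ∀ y, ∫ x in (0 : ℝ)..y, f (c * x) = c⁻¹ * ∫ x in (0 : ℝ)..c * y, f x := fun y => by
    simp [intervalIntegral.integral_comp_mul_left f hc.ne']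
  have hnum : ∫ y in Ioi (0 : ℝ), (t * g (c * y)) * ∫ x in (0 : ℝ)..y, s * f (c * x) =
      s * t * c⁻¹ ^ 2 * ∫ y in Ioi (0 : ℝ), g y * ∫ x in (0 : ℝ)..y, f x := by
    have hscale := integral_comp_mul_left_Ioi (fun y => g y * ∫ x in (0 : ℝ)..y, f x) 0 hc
    rw [mul_zero, smul_eq_mul] at hscale
    rw [pow_two, ← mul_assoc, mul_assoc _ c⁻¹, ← hscale, ← integral_const_mul]
    congr 1 with y
    rw [intervalIntegral.integral_const_mul, hprim]
    ring
  have hden : ∀ φ : ℝ → ℝ, ∀ r : ℝ,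
      ∫ x in Ioi (0 : ℝ), r * φ (c * x) = r * c⁻¹ * ∫ x in Ioi (0 : ℝ), φ x := fun φ r => by
    rw [integral_const_mul, integral_comp_mul_left_Ioi φ 0 hc, mul_zero, smul_eq_mul, mul_assoc]
  rw [probLE, hnum, hden, hden, probLE]
  field_simp

lemma tendsto_probLE {ι : Type*} {l : Filter ι} [l.IsCountablyGenerated] {F G : ι → ℝ → ℝ}
    {f_bound g_bound : ℝ → ℝ}
    (hF_meas : ∀ᶠ i in l, AEStronglyMeasurable (F i) (volume.restrict (Ioi 0)))
    (hF_le : ∀ᶠ i in l, ∀ x ∈ Ioi 0, ‖F i x‖ ≤ f_bound x) (hf_bound : IntegrableOn f_bound (Ioi 0))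
    (hF_lim : ∀ x ∈ Ioi 0, Tendsto (F · x) l (𝓝 (f x)))
    (hG_meas : ∀ᶠ i in l, AEStronglyMeasurable (G i) (volume.restrict (Ioi 0)))
    (hG_le : ∀ᶠ i in l, ∀ y ∈ Ioi 0, ‖G i y‖ ≤ g_bound y) (hg_bound : IntegrableOn g_bound (Ioi 0))
    (hG_lim : ∀ y ∈ Ioi 0, Tendsto (G · y) l (𝓝 (g y)))
    (hf : ∫ x in Ioi (0 : ℝ), f x ≠ 0) (hg : ∫ y in Ioi (0 : ℝ), g y ≠ 0) :
    Tendsto (fun i => probLE (F i) (G i)) l (𝓝 (probLE f g)) := by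
  have on_Ioi {p : ℝ → Prop} (hp : ∀ x ∈ Ioi 0, p x) : ∀ᵐ x ∂volume.restrict (Ioi 0), p x :=
    ae_restrict_of_forall_mem measurableSet_Ioi hp
  have hF_int : ∀ᶠ i in l, IntegrableOn (F i) (Ioi 0) := by
    filter_upwards [hF_meas, hF_le] with i hmeas hle using hf_bound.mono' hmeas (on_Ioi hle)
  have hprim : ∀ y ∈ Ioi (0 : ℝ),
      Tendsto (fun i => ∫ x in (0 : ℝ)..y, F i x) l (𝓝 (∫ x in (0 : ℝ)..y, f x)) := fun y hy => by
    have hsub : uIoc 0 y ⊆ Ioi 0 := by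
      rw [uIoc_of_le (mem_Ioi.1 hy).le]
      exact Ioc_subset_Ioi_self
    refine intervalIntegral.tendsto_integral_filter_of_dominated_convergence f_bound ?_ ?_
      (intervalIntegrable_iff.2 (hf_bound.mono_set hsub))
      (.of_forall fun x hx => hF_lim x (hsub hx))
    · exact hF_meas.mono fun i hi => hi.mono_measure (Measure.restrict_mono hsub le_rfl)
    · exact hF_le.mono fun i hi => .of_forall fun x hx => hi x (hsub hx)
  refine .div ?_ (.mul ?_ ?_) (mul_ne_zero hf hg)
  · refine tendsto_integral_filter_of_dominated_convergence
      (fun y => g_bound y * ∫ x in Ioi (0 : ℝ), f_bound x) ?_ ?_ (hg_bound.mul_const _)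
      (on_Ioi fun y hy => (hG_lim y hy).mul (hprim y hy))
    · filter_upwards [hG_meas, hF_int] with i hmeas hint
        using hmeas.mul (aestronglyMeasurable_primitive_Ioi hint)
    · filter_upwards [hG_le, hF_le, hF_int] with i hGle hFle hint
      refine on_Ioi fun y hy => ?_
      rw [norm_mul]
      gcongr
      · exact (norm_nonneg _).trans (hGle y hy)
      · exact hGle y hy
      · exact (norm_integral_zero_le_integral_Ioi hint (mem_Ioi.1 hy).le).trans
          (setIntegral_mono_on hint.norm hf_bound measurableSet_Ioi hFle)
  · exact tendsto_integral_filter_of_dominated_convergence f_bound hF_meas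
      (hF_le.mono fun i hi => on_Ioi hi) hf_bound (on_Ioi hF_lim)
  · exact tendsto_integral_filter_of_dominated_convergence g_bound hG_meas
      (hG_le.mono fun i hi => on_Ioi hi) hg_bound (on_Ioi hG_lim)

lemma integral_integral_Ioi_comp_mul (hf_meas : Measurable f) (hf : IntegrableOn f (Ioi 0))
    (hg_meas : Measurable g) (hg : IntegrableOn g (Ioi 0)) :
    ∫ r in (0 : ℝ)..1, ∫ y in Ioi (0 : ℝ), y * g y * f (r * y) =
      ∫ y in Ioi (0 : ℝ), g y * ∫ x in (0 : ℝ)..y, f x := by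
  have hslice (φ ψ : ℝ → ℝ) (y : ℝ) :
      ∫ r in Ioc (0 : ℝ) 1, y * ψ y * φ (r * y) = ψ y * ∫ x in (0 : ℝ)..y, φ x := by
    rw [← intervalIntegral.integral_of_le zero_le_one, intervalIntegral.integral_const_mul,
      mul_comm y, mul_assoc, intervalIntegral.mul_integral_comp_mul_right, zero_mul, one_mul]
  have hint : Integrable (Function.uncurry fun r y => y * g y * f (r * y))
      ((volume.restrict (Ioc 0 1)).prod (volume.restrict (Ioi 0))) := by
    refine (integrable_prod_iff' (by fun_prop)).2 ⟨?_, ?_⟩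
    · refine ae_restrict_of_forall_mem measurableSet_Ioi fun y hy => ?_
      have hfi : IntervalIntegrable f volume 0 y :=
        (intervalIntegrable_iff_integrableOn_Ioc_of_le (mem_Ioi.1 hy).le).2
          (hf.mono_set Ioc_subset_Ioi_self)
      have hcomp := (hfi.comp_mul_right (c := y)).const_mul (y * g y)
      rw [zero_div, div_self (mem_Ioi.1 hy).ne'] at hcomp
      exact hcomp.1
    · refine (integrableOn_mul_primitive hf.norm hg.norm).congr_fun (fun y hy => ?_)
        measurableSet_Ioi
      simp only [Function.uncurry, norm_mul, norm_of_nonneg (mem_Ioi.1 hy).le]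
      exact (hslice (fun x => ‖f x‖) (fun y => ‖g y‖) y).symm
  rw [intervalIntegral.integral_of_le zero_le_one, integral_integral_swap hint]
  simp only [hslice]

end ProbLE

section Weights

/-- The radial beta-type weight `x ^ n * (1 - x ^ 2) ^ α` of the Euclidean unit ball (the
Beltrami–Klein model of hyperbolic space). It is meaningful only for `x ∈ [0, 1]`. -/
noncomputable def ballWeight (n : ℕ) (α x : ℝ) : ℝ := x ^ n * (1 - x ^ 2) ^ α

/-- The radial Gaussian weight `x ^ n * exp (c * x ^ 2)`, the scaling limit of `ballWeight`. The
sign of `c` is free: both decaying and (truncated) growing weights occur. -/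
noncomputable def gaussWeight (n : ℕ) (c x : ℝ) : ℝ := x ^ n * exp (c * x ^ 2)

lemma measurable_ballWeight (n : ℕ) (α : ℝ) : Measurable (ballWeight n α) := by
  unfold ballWeight
  fun_prop

lemma continuous_gaussWeight (n : ℕ) (c : ℝ) : Continuous (gaussWeight n c) := by
  unfold gaussWeight
  fun_prop

lemma continuousOn_ballWeight (n : ℕ) (α : ℝ) : ContinuousOn (ballWeight n α) (Ioo (-1) 1) := by
  refine (continuousOn_pow n).mul (ContinuousOn.rpow_const (by fun_prop) fun x hx => Or.inl ?_)
  nlinarith [hx.1, hx.2]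

lemma ballWeight_nonneg (n : ℕ) (α : ℝ) {x : ℝ} (hx : x ∈ Icc 0 1) : 0 ≤ ballWeight n α x := by
  have : 0 ≤ 1 - x ^ 2 := by nlinarith [hx.1, hx.2]
  exact mul_nonneg (pow_nonneg hx.1 n) (rpow_nonneg this α)

lemma gaussWeight_pos (n : ℕ) (c : ℝ) {x : ℝ} (hx : 0 < x) : 0 < gaussWeight n c x :=
  mul_pos (pow_pos hx n) (exp_pos _)

lemma integrableOn_gaussWeight (n : ℕ) {c : ℝ} (hc : c < 0) :
    IntegrableOn (gaussWeight n c) (Ioi 0) := by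
  have hint := integrableOn_rpow_mul_exp_neg_mul_sq (neg_pos.2 hc)
    (neg_one_lt_zero.trans_le n.cast_nonneg)
  simp only [neg_neg, rpow_natCast] at hint
  exact hint

lemma integral_gaussWeight (n : ℕ) {c : ℝ} (hc : c < 0) :
    ∫ x in Ioi 0, gaussWeight n c x =
      (-c) ^ (-((n : ℝ) + 1) / 2) * (1 / 2) * Gamma (((n : ℝ) + 1) / 2) := by
  simpa only [gaussWeight, neg_neg, rpow_natCast, rpow_ofNat] using
    integral_rpow_mul_exp_neg_mul_rpow two_pos (neg_one_lt_zero.trans_le n.cast_nonneg)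
      (neg_pos.2 hc)

lemma integral_rpow_mul_one_sub_rpow {a b : ℝ} (ha : 0 < a) (hb : 0 < b) :
    ∫ x in (0 : ℝ)..1, x ^ (a - 1) * (1 - x) ^ (b - 1) = ProbabilityTheory.beta a b := by
  have hcast : Complex.betaIntegral a b =
      ((∫ x in (0 : ℝ)..1, x ^ (a - 1) * (1 - x) ^ (b - 1) : ℝ) : ℂ) := by
    rw [Complex.betaIntegral, ← intervalIntegral.integral_ofReal]
    refine intervalIntegral.integral_congr fun x hx => ?_
    rw [uIcc_of_le zero_le_one] at hx
    simp [Complex.ofReal_cpow hx.1, Complex.ofReal_cpow (sub_nonneg.2 hx.2)]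
  rw [ProbabilityTheory.beta_eq_betaIntegralReal a b ha hb, hcast, Complex.ofReal_re]

lemma integral_ballWeight (n : ℕ) {α : ℝ} (hα : -1 < α) :
    ∫ x in (0 : ℝ)..1, ballWeight n α x =
      ProbabilityTheory.beta (((n : ℝ) + 1) / 2) (α + 1) / 2 := by
  have hsubst := intervalIntegral.integral_comp_mul_deriv_of_deriv_nonneg (a := 0) (b := 1)
    (f := fun x : ℝ => x ^ 2) (f' := fun x => 2 * x)
    (g := fun y : ℝ => y ^ (((n : ℝ) + 1) / 2 - 1) * (1 - y) ^ (α + 1 - 1)) (by fun_prop)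
    (fun x _ => by simpa using hasDerivAt_pow 2 x) fun x hx => by
      rw [min_eq_left zero_le_one] at hx
      linarith [hx.1]
  rw [zero_pow two_ne_zero, one_pow, integral_rpow_mul_one_sub_rpow (by positivity) (by linarith)]
    at hsubst
  rw [← hsubst, eq_div_iff two_ne_zero, ← intervalIntegral.integral_mul_const]
  refine intervalIntegral.integral_congr_ae (.of_forall fun x hx => ?_)
  rw [uIoc_of_le zero_le_one] at hx
  have hpow : (x ^ 2) ^ (((n : ℝ) + 1) / 2 - 1) * x = x ^ n := by
    rw [← rpow_natCast_mul hx.1.le, ← rpow_add_one hx.1.ne', ← rpow_natCast]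
    congr 1
    push_cast
    ring
  simp only [Function.comp, ballWeight, add_sub_cancel_right, ← hpow]
  ring

lemma omegaS_pos {n : ℕ} (hn : 0 < n) : 0 < omegaS n := by
  have := Gamma_pos_of_pos (half_pos (Nat.cast_pos (α := ℝ).2 hn))
  unfold omegaS
  positivity

lemma omegaS_mul_integral_ballWeight (m : ℕ) {n : ℕ} (hn : 0 < n) :
    omegaS (m + 1) * omegaS n * ∫ x in (0 : ℝ)..1, ballWeight m ((n : ℝ) / 2 - 1) x =
      omegaS (n + m + 1) := by
  have hn' : 0 < (n : ℝ) / 2 := by positivity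
  rw [integral_ballWeight m (by linarith), ProbabilityTheory.beta, sub_add_cancel]
  have hΓm : Gamma (((m : ℝ) + 1) / 2) ≠ 0 := (Gamma_pos_of_pos (by positivity)).ne'
  have hΓn : Gamma ((n : ℝ) / 2) ≠ 0 := (Gamma_pos_of_pos hn').ne'
  simp only [omegaS]
  push_cast
  rw [show ((n : ℝ) + m + 1) / 2 = (m + 1) / 2 + n / 2 by ring, rpow_add pi_pos]
  field_simp

end Weights

section Truncation

lemma integral_indicator_Iic (f : ℝ → ℝ) {a b c : ℝ} (hab : a ≤ b) (hac : a ≤ c) :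
    ∫ x in a..b, (Iic c).indicator f x = ∫ x in a..(min b c), f x := by
  rw [intervalIntegral.integral_of_le hab, intervalIntegral.integral_of_le (le_min hab hac),
    setIntegral_indicator measurableSet_Iic, Ioc_inter_Iic]

lemma integral_Ioi_indicator_Iic (f : ℝ → ℝ) {a b : ℝ} (hab : a ≤ b) :
    ∫ x in Ioi a, (Iic b).indicator f x = ∫ x in a..b, f x := by
  rw [intervalIntegral.integral_of_le hab, setIntegral_indicator measurableSet_Iic, Ioi_inter_Iic]

lemma integrableOn_Ioi_indicator_Iic {f : ℝ → ℝ} {a b : ℝ} :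
    IntegrableOn ((Iic b).indicator f) (Ioi a) ↔ IntegrableOn f (Ioc a b) := by
  rw [IntegrableOn, integrable_indicator_iff measurableSet_Iic, IntegrableOn,
    Measure.restrict_restrict measurableSet_Iic, inter_comm, Ioi_inter_Iic, IntegrableOn]

lemma integrableOn_indicator_Iic_ballWeight_of_lt_one (n : ℕ) (α : ℝ) {b : ℝ} (hb : b < 1) :
    IntegrableOn ((Iic b).indicator (ballWeight n α)) (Ioi 0) := by
  rw [integrableOn_Ioi_indicator_Iic]
  have hcont := (continuousOn_ballWeight n α).mono (Icc_subset_Ioo neg_one_lt_zero hb)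
  exact hcont.integrableOn_Icc.mono_set Ioc_subset_Icc_self

lemma integrableOn_indicator_Iic_one_ballWeight (n : ℕ) {α : ℝ} (hα : -1 < α) :
    IntegrableOn ((Iic 1).indicator (ballWeight n α)) (Ioi 0) := by
  refine Integrable.of_integral_ne_zero ?_
  rw [integral_Ioi_indicator_Iic _ zero_le_one, integral_ballWeight n hα]
  exact (half_pos (ProbabilityTheory.beta_pos (by positivity) (by linarith))).ne'

lemma integral_pow_mul_integral_div (a : ℕ) {b : ℝ} (hb : 0 < b) {g h : ℝ → ℝ}
    (hg_meas : Measurable g) (hg : IntegrableOn g (Ioi 0)) (hh_meas : Measurable h)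
    (hh : IntegrableOn (fun t => t ^ a * h t) (Ioc 0 b)) :
    ∫ r in (0 : ℝ)..1, r ^ a * ∫ z in (0 : ℝ)..(b / r), z ^ (a + 1) * g z * h (r * z) =
      ∫ z in Ioi (0 : ℝ), g z * ∫ t in (0 : ℝ)..z, (Iic b).indicator (fun t => t ^ a * h t) t := by
  have hmeas : Measurable ((Iic b).indicator fun t => t ^ a * h t) :=
    ((measurable_id.pow_const a).mul hh_meas).indicator measurableSet_Iic
  rw [← integral_integral_Ioi_comp_mul hmeas (integrableOn_Ioi_indicator_Iic.2 hh) hg_meas hg]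
  refine intervalIntegral.integral_congr_ae (.of_forall fun r hr => ?_)
  rw [uIoc_of_le zero_le_one] at hr
  rw [← integral_Ioi_indicator_Iic _ (div_pos hb hr.1).le, ← integral_const_mul]
  congr 1 with z
  by_cases hz : r * z ≤ b
  · rw [indicator_of_mem (mem_Iic.2 ((le_div_iff₀' hr.1).2 hz)), indicator_of_mem (mem_Iic.2 hz)]
    ring
  · rw [indicator_of_notMem (notMem_Iic.2 ((div_lt_iff₀' hr.1).2 (not_le.1 hz))),
      indicator_of_notMem (notMem_Iic.2 (not_le.1 hz))]
    ring

end Truncation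

section Hyperbolic

lemma one_sub_tanh_sq (x : ℝ) : 1 - tanh x ^ 2 = (cosh x ^ 2)⁻¹ := by
  have := (cosh_pos x).ne'
  rw [tanh_eq_sinh_div_cosh]
  field_simp
  rw [cosh_sq, add_sub_cancel_left]

lemma hasDerivAt_tanh (x : ℝ) : HasDerivAt tanh (cosh x ^ 2)⁻¹ x := by
  have hdiv := (hasDerivAt_sinh x).div (hasDerivAt_cosh x) (cosh_pos x).ne'
  rw [← pow_two, ← pow_two, cosh_sq, add_sub_cancel_left, one_div, ← cosh_sq] at hdiv
  exact hdiv.congr_of_eventuallyEq (.of_forall tanh_eq_sinh_div_cosh)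

lemma tanh_pos {x : ℝ} (hx : 0 < x) : 0 < tanh x := by
  rw [tanh_eq_sinh_div_cosh]
  exact div_pos (sinh_pos_iff.2 hx) (cosh_pos x)

lemma integral_cosh_pow_mul_sinh_pow (m a : ℕ) (x : ℝ) :
    ∫ r in (0 : ℝ)..x, cosh r ^ m * sinh r ^ a =
      ∫ t in (0 : ℝ)..(tanh x), ballWeight a (-((m : ℝ) + a + 2) / 2) t := by
  have hsubst := intervalIntegral.integral_comp_mul_deriv_of_deriv_nonneg (a := 0) (b := x)
    (g := ballWeight a (-((m : ℝ) + a + 2) / 2))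
    (fun r _ => (hasDerivAt_tanh r).continuousAt.continuousWithinAt)
    (fun r _ => hasDerivAt_tanh r) fun r _ => by positivity
  rw [tanh_zero] at hsubst
  rw [← hsubst]
  congr 1 with r
  have hcosh := cosh_pos r
  have hpow : ((cosh r ^ 2)⁻¹) ^ (-((m : ℝ) + a + 2) / 2) = cosh r ^ (m + a + 2) := by
    rw [inv_rpow (by positivity), ← rpow_neg (by positivity), ← rpow_natCast_mul hcosh.le,
      ← rpow_natCast (cosh r) (m + a + 2)]
    congr 1
    push_cast
    ring
  rw [Function.comp, ballWeight, one_sub_tanh_sq, hpow, tanh_eq_sinh_div_cosh, div_pow]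
  field_simp
  ring

lemma RK_eq (K x : ℝ) : RK K x = tanh (√(-K) * x) / √(-K) := by
  rw [RK, add_comm, ← cosh_sq, sqrt_sq (cosh_pos _).le, tanh_eq_sinh_div_cosh,
    div_mul_eq_div_div_swap]

lemma Cconst_eq (a γ : ℕ) {d : ℕ} (hd : γ + 1 + a < d) {K : ℝ} (hK : K < 0) (u : ℝ) :
    Cconst K d (d - (γ + 1 + a) + γ) u = omegaS (a + 1) * (√(-K) ^ (a + 1))⁻¹ *
      ∫ t in (0 : ℝ)..(tanh (√(-K) * u)), ballWeight a (-((d : ℝ) + 1) / 2) t := by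
  obtain ⟨m, hm⟩ : ∃ m, d - (γ + 1 + a) + γ = m := ⟨_, rfl⟩
  obtain rfl : d = m + a + 1 := by lia
  have hk : 0 < √(-K) := sqrt_pos.2 (neg_pos.2 hK)
  have hpow : √(-K) ^ (-((m + a + 1 : ℕ) : ℝ) + m + 1) = (√(-K) ^ a)⁻¹ := by
    rw [← rpow_natCast, ← rpow_neg hk.le]
    congr 1
    push_cast
    ring
  have hexp : ((m + a + 1 : ℕ) : ℝ) + 1 = (m : ℝ) + a + 2 := by push_cast; ring
  rw [hm, hexp, ← integral_cosh_pow_mul_sinh_pow, Cconst, hpow,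
    show m + a + 1 - m = a + 1 by lia, Nat.add_sub_cancel, intervalIntegral.integral_comp_mul_left
      (fun r => cosh r ^ m * sinh r ^ a) hk.ne', mul_zero, smul_eq_mul, pow_succ, mul_inv]
  ring

lemma integral_pow_mul_integral_min (a γ : ℕ) {α : ℝ} (hα : -1 < α) (β : ℝ) {k T : ℝ}
    (hk : 0 < k) (hT : T ∈ Ioo 0 1) :
    ∫ r in (0 : ℝ)..(1 / k), r ^ a * ∫ z in (0 : ℝ)..(min 1 (T / k / r)),
        z ^ (γ + 1 + a) * (1 - z ^ 2) ^ α * (1 - k ^ 2 * r ^ 2 * z ^ 2) ^ β =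
      (k ^ (a + 1))⁻¹ * ∫ z in Ioi (0 : ℝ), (Iic 1).indicator (ballWeight γ α) z *
        ∫ t in (0 : ℝ)..z, (Iic T).indicator (ballWeight a β) t := by
  have hcone := integral_pow_mul_integral_div a hT.1 (h := fun t => (1 - t ^ 2) ^ β)
    ((measurable_ballWeight γ α).indicator measurableSet_Iic)
    (integrableOn_indicator_Iic_one_ballWeight γ hα) (by fun_prop)
    (integrableOn_Ioi_indicator_Iic.1 (integrableOn_indicator_Iic_ballWeight_of_lt_one a β hT.2))
  rw [← zero_div k, ← intervalIntegral.inv_mul_integral_comp_div, zero_div, pow_succ k a,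
    mul_inv_rev, mul_assoc]
  unfold ballWeight at hcone ⊢
  rw [← hcone, ← intervalIntegral.integral_const_mul (k ^ a)⁻¹]
  congr 1
  refine intervalIntegral.integral_congr_ae (.of_forall fun s hs => ?_)
  rw [uIoc_of_le zero_le_one] at hs
  rw [div_div_div_cancel_right₀ hk.ne', min_comm,
    ← integral_indicator_Iic _ (div_pos hT.1 hs.1).le zero_le_one, div_pow,
    div_eq_inv_mul, mul_assoc]
  congr 3 with z
  by_cases hz : z ∈ Iic 1
  · simp only [indicator_of_mem hz]
    field_simp
    ring
  · simp only [indicator_of_notMem hz, mul_zero, zero_mul]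

lemma Dconst_mul_omegaS (a γ : ℕ) {d : ℕ} (hd : γ + 1 + a < d) :
    Dconst d (γ + 1 + a) γ * omegaS (d - γ) =
      omegaS (a + 1) /
        ∫ z in (0 : ℝ)..1, ballWeight γ (((d : ℝ) - (γ + 1 + a : ℕ)) / 2 - 1) z := by
  have hγ_ne := (omegaS_pos γ.succ_pos).ne'
  have hdq_ne := (omegaS_pos (Nat.sub_pos_of_lt hd)).ne'
  have hdγ_ne := (omegaS_pos (show 0 < d - γ by lia)).ne'
  rw [Dconst, show γ + 1 + a - γ = a + 1 by lia, ← Nat.cast_sub hd.le,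
    ← omegaS_mul_integral_ballWeight γ (Nat.sub_pos_of_lt hd)]
  field_simp

lemma Pprob_eq_probLE (a γ : ℕ) {d : ℕ} (hd : γ + 1 + a < d) {K u : ℝ} (hK : K < 0)
    (hu : 0 < u) :
    Pprob d (γ + 1 + a) γ K u =
      probLE ((Iic (tanh (√(-K) * u))).indicator (ballWeight a (-((d : ℝ) + 1) / 2)))
        ((Iic 1).indicator (ballWeight γ (((d : ℝ) - (γ + 1 + a : ℕ)) / 2 - 1))) := by
  have hk : 0 < √(-K) := sqrt_pos.2 (neg_pos.2 hK)
  have hT : tanh (√(-K) * u) ∈ Ioo 0 1 := ⟨tanh_pos (mul_pos hk hu), tanh_lt_one _⟩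
  have hα : -1 < ((d : ℝ) - (γ + 1 + a : ℕ)) / 2 - 1 := by
    have : ((γ + 1 + a : ℕ) : ℝ) < d := Nat.cast_lt.2 hd
    linarith
  have hdouble := integral_pow_mul_integral_min a γ hα (-((d : ℝ) + 1) / 2) hk hT
  rw [sq_sqrt (neg_pos.2 hK).le] at hdouble
  rw [Pprob, Dconst_mul_omegaS a γ hd, RK_eq, Cconst_eq a γ hd hK u,
    show ((γ + 1 + a : ℕ) : ℝ) - γ - 1 = a by push_cast; ring, probLE,
    integral_Ioi_indicator_Iic _ hT.1.le, integral_Ioi_indicator_Iic _ zero_le_one]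
  simp only [rpow_natCast, ← sub_neg_eq_add (1 : ℝ), ← neg_mul]
  rw [hdouble]
  have ha_ne := (omegaS_pos a.succ_pos).ne'
  field_simp

end Hyperbolic

section GaussianLimit

lemma integral_exp_mul_pow (a : ℕ) (κ u : ℝ) :
    ∫ s in (0 : ℝ)..u, exp (κ * s ^ 2 / 2) * s ^ a =
      u ^ (a + 1) * ∫ t in (0 : ℝ)..1, gaussWeight a (u ^ 2 * κ / 2) t := by
  have hscale := intervalIntegral.mul_integral_comp_mul_left (a := 0) (b := 1)
    (f := fun s => exp (κ * s ^ 2 / 2) * s ^ a) u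
  rw [mul_zero, mul_one] at hscale
  rw [← hscale, pow_succ', mul_assoc, ← intervalIntegral.integral_const_mul (u ^ a)]
  congr 3 with t
  rw [gaussWeight, mul_pow, mul_pow]
  ring_nf

lemma integral_pow_mul_integral_exp (a γ : ℕ) {c : ℝ} (hc : 0 < c) :
    ∫ r in (0 : ℝ)..1, r ^ a * ∫ v in (0 : ℝ)..(1 / r),
        v ^ (γ + 1 + a) * exp (-c * v ^ 2 * (1 - r ^ 2)) =
      ∫ y in Ioi (0 : ℝ), gaussWeight γ (-c) y *
        ∫ t in (0 : ℝ)..y, (Iic 1).indicator (gaussWeight a c) t := by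
  have hcone := integral_pow_mul_integral_div a one_pos (h := fun t => exp (c * t ^ 2))
    (continuous_gaussWeight γ (-c)).measurable (integrableOn_gaussWeight γ (neg_neg_of_pos hc))
    (by fun_prop) ((continuous_gaussWeight a c).continuousOn.integrableOn_Icc.mono_set
      Ioc_subset_Icc_self)
  unfold gaussWeight at hcone ⊢
  rw [← hcone]
  congr! 5 with r v
  rw [show -c * v ^ 2 * (1 - r ^ 2) = -c * v ^ 2 + c * (r * v) ^ 2 by ring, exp_add]
  ring

lemma omegaS_mul_integral_gaussWeight (n : ℕ) {c : ℝ} (hc : 0 < c) :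
    omegaS (n + 1) * ∫ x in Ioi 0, gaussWeight n (-c) x = (π / c) ^ (((n : ℝ) + 1) / 2) := by
  have hΓ : Gamma (((n : ℝ) + 1) / 2) ≠ 0 := (Gamma_pos_of_pos (by positivity)).ne'
  rw [integral_gaussWeight n (neg_neg_of_pos hc), neg_neg, omegaS, Nat.cast_succ,
    div_rpow pi_pos.le hc.le, neg_div, rpow_neg hc.le]
  field_simp

lemma rhoConst_eq_probLE (a γ : ℕ) {u κ : ℝ} (hu : 0 < u) (hκ : 0 < κ) :
    rhoConst u (γ + 1 + a) γ κ =
      probLE ((Iic 1).indicator (gaussWeight a (u ^ 2 * κ / 2)))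
        (gaussWeight γ (-(u ^ 2 * κ / 2))) := by
  have hc : 0 < u ^ 2 * κ / 2 := by positivity
  have hconst : (2 * π) ^ (-((γ : ℝ) + 1) / 2) * u ^ (γ + 1) * κ ^ (((γ : ℝ) + 1) / 2) *
      (π / (u ^ 2 * κ / 2)) ^ (((γ : ℝ) + 1) / 2) = 1 := by
    have hu_pow : u ^ (γ + 1) = (u ^ 2) ^ (((γ : ℝ) + 1) / 2) := by
      rw [← rpow_natCast_mul hu.le, ← rpow_natCast]
      congr 1
      push_cast
      ring
    rw [hu_pow, neg_div, rpow_neg (by positivity), ← inv_rpow (by positivity),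
      ← mul_rpow (by positivity) (by positivity), ← mul_rpow (by positivity) (by positivity),
      ← mul_rpow (by positivity) (by positivity)]
    field_simp
    exact one_rpow _
  have hω := (omegaS_mul_integral_gaussWeight γ hc).trans (eq_inv_of_mul_eq_one_right hconst)
  have hint_ne : ∫ y in Ioi 0, gaussWeight γ (-(u ^ 2 * κ / 2)) y ≠ 0 :=
    right_ne_zero_of_mul (hω.trans_ne (by positivity))
  rw [rhoConst, show ((γ + 1 + a : ℕ) : ℝ) - γ - 1 = a by push_cast; ring]
  simp only [rpow_natCast, show -(1 / 2) * u ^ 2 * κ = -(u ^ 2 * κ / 2) by ring]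
  rw [integral_exp_mul_pow, integral_pow_mul_integral_exp a γ hc, probLE,
    integral_Ioi_indicator_Iic _ zero_le_one,
    eq_div_of_mul_eq hint_ne hω]
  field_simp
  ring

lemma probLE_gaussWeight_mem_Ioo (m n : ℕ) (b : ℝ) {c : ℝ} (hc : 0 < c) :
    probLE ((Iic 1).indicator (gaussWeight m b)) (gaussWeight n (-c)) ∈ Ioo (0 : ℝ) 1 := by
  refine probLE_mem_Ioo one_pos ?_ (fun x hx => ?_) (fun x hx => ?_)
    (integrableOn_gaussWeight n (neg_neg_of_pos hc)) (fun y hy => (gaussWeight_pos n _ hy).le)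
    fun y hy => gaussWeight_pos n _ hy.1
  · exact integrableOn_Ioi_indicator_Iic.2
      ((continuous_gaussWeight m b).continuousOn.integrableOn_Icc.mono_set Ioc_subset_Icc_self)
  · exact indicator_apply_nonneg fun _ => (gaussWeight_pos m b hx).le
  · rw [indicator_of_mem (mem_Iic.2 hx.2.le)]
    exact gaussWeight_pos m b hx.1

end GaussianLimit

section Convergence

lemma tendsto_apply_mul_of_hasDerivAt {ι : Type*} {l : Filter ι} {f : ℝ → ℝ} {f' c : ℝ}
    {t b : ι → ℝ} (hf : HasDerivAt f f' 0) (hf0 : f 0 = 0) (ht : Tendsto t l (𝓝 0))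
    (htb : Tendsto (fun i => t i * b i) l (𝓝 c)) :
    Tendsto (fun i => f (t i) * b i) l (𝓝 (f' * c)) := by
  have hslope : Tendsto (fun i => dslope f 0 (t i)) l (𝓝 f') := by
    rw [← hf.deriv, ← dslope_same f 0]
    exact (continuousAt_dslope_same.2 hf.differentiableAt).tendsto.comp ht
  refine (hslope.mul htb).congr fun i => ?_
  have hfactor := sub_smul_dslope f 0 (t i)
  rw [sub_zero, hf0, sub_zero, smul_eq_mul] at hfactor
  rw [← hfactor]
  ring

lemma tendsto_one_add_rpow {ι : Type*} {l : Filter ι} {c : ℝ} {t b : ι → ℝ}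
    (ht : Tendsto t l (𝓝 0)) (htb : Tendsto (fun i => t i * b i) l (𝓝 c)) :
    Tendsto (fun i => (1 + t i) ^ b i) l (𝓝 (exp c)) := by
  have hlog : HasDerivAt (fun x : ℝ => log (1 + x)) 1 0 := by
    simpa using ((hasDerivAt_id (0 : ℝ)).const_add 1).log (by simp)
  have hexp := (continuous_exp.tendsto (1 * c)).comp
    (tendsto_apply_mul_of_hasDerivAt hlog (by simp) ht htb)
  rw [one_mul] at hexp
  refine hexp.congr' ?_
  filter_upwards [ht.eventually_const_lt neg_one_lt_zero] with i hi
  rw [Function.comp, rpow_def_of_pos (by linarith)]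

lemma ballWeight_le_gaussWeight (n : ℕ) {α x : ℝ} (hα : 0 ≤ α) (hx : x ∈ Icc 0 1) :
    ballWeight n α x ≤ gaussWeight n (-α) x := by
  have hbase : 0 ≤ 1 - x ^ 2 := by nlinarith [hx.1, hx.2]
  refine mul_le_mul_of_nonneg_left ?_ (pow_nonneg hx.1 n)
  calc (1 - x ^ 2) ^ α ≤ exp (-x ^ 2) ^ α :=
        rpow_le_rpow hbase (one_sub_le_exp_neg _) hα
    _ = exp (-α * x ^ 2) := by
        rw [← exp_mul]
        ring_nf

lemma ballWeight_le_of_le (n : ℕ) (α : ℝ) {b x : ℝ} (hx : 0 ≤ x) (hxb : x ≤ b) (hb : b < 1) :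
    ballWeight n α x ≤ b ^ n * (1 - b ^ 2) ^ (-|α|) := by
  have hb_base : 0 < 1 - b ^ 2 := by nlinarith
  have hbase : 1 - b ^ 2 ≤ 1 - x ^ 2 := by nlinarith
  have hx_base : 0 < 1 - x ^ 2 := hb_base.trans_le hbase
  have hrpow : (1 - x ^ 2) ^ α ≤ (1 - b ^ 2) ^ (-|α|) :=
    (rpow_le_rpow_of_exponent_ge hx_base (by nlinarith) (neg_abs_le α)).trans
      (rpow_le_rpow_of_nonpos hb_base hbase (neg_nonpos.2 (abs_nonneg α)))
  exact mul_le_mul (pow_le_pow_left₀ hx hxb n) hrpow (by positivity)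
    (pow_nonneg (hx.trans hxb) n)

variable {ι : Type*} {l : Filter ι} {T α : ι → ℝ} {c : ℝ}

lemma tendsto_rescaled_ballWeight (n : ℕ) (hT : Tendsto T l (𝓝[>] 0))
    (hα : Tendsto (fun i => T i ^ 2 * α i) l (𝓝 c)) (x : ℝ) :
    Tendsto (fun i => (T i ^ n)⁻¹ * ballWeight n (α i) (T i * x)) l (𝓝 (gaussWeight n (-c) x)) := by
  have hT_pos : ∀ᶠ i in l, 0 < T i := eventually_mem_of_tendsto_nhdsWithin hT
  have hbase : Tendsto (fun i => -(T i * x) ^ 2) l (𝓝 0) := by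
    simpa using (((tendsto_nhds_of_tendsto_nhdsWithin hT).mul_const x).pow 2).neg
  have hprod : Tendsto (fun i => -(T i * x) ^ 2 * α i) l (𝓝 (-c * x ^ 2)) :=
    (hα.neg.mul_const (x ^ 2)).congr fun i => by ring
  refine ((tendsto_one_add_rpow hbase hprod).const_mul (x ^ n)).congr' ?_
  filter_upwards [hT_pos] with i hTi
  rw [ballWeight, mul_pow _ _ n, ← sub_eq_add_neg]
  field_simp

lemma tendsto_rescaled_indicator_Iic_ballWeight (n : ℕ) (hT : Tendsto T l (𝓝[>] 0))
    (hα : Tendsto (fun i => T i ^ 2 * α i) l (𝓝 c)) (x : ℝ) :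
    Tendsto (fun i => (T i ^ n)⁻¹ * (Iic (T i)).indicator (ballWeight n (α i)) (T i * x)) l
      (𝓝 ((Iic 1).indicator (gaussWeight n (-c)) x)) := by
  have hT_pos : ∀ᶠ i in l, 0 < T i := eventually_mem_of_tendsto_nhdsWithin hT
  have hmem : ∀ᶠ i in l, T i * x ∈ Iic (T i) ↔ x ∈ Iic 1 := by
    filter_upwards [hT_pos] with i hTi
    exact mul_le_iff_le_one_right hTi
  by_cases hx : x ∈ Iic 1
  · rw [indicator_of_mem hx]
    refine (tendsto_rescaled_ballWeight n hT hα x).congr' ?_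
    filter_upwards [hmem] with i hi
    rw [indicator_of_mem (hi.2 hx)]
  · rw [indicator_of_notMem hx]
    refine tendsto_const_nhds.congr' ?_
    filter_upwards [hmem] with i hi
    rw [indicator_of_notMem (mt hi.1 hx), mul_zero]

lemma tendsto_rescaled_indicator_Iic_one_ballWeight (n : ℕ) (hT : Tendsto T l (𝓝[>] 0))
    (hα : Tendsto (fun i => T i ^ 2 * α i) l (𝓝 c)) (x : ℝ) :
    Tendsto (fun i => (T i ^ n)⁻¹ * (Iic 1).indicator (ballWeight n (α i)) (T i * x)) l
      (𝓝 (gaussWeight n (-c) x)) := by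
  have hTx : Tendsto (fun i => T i * x) l (𝓝 0) := by
    simpa using (tendsto_nhds_of_tendsto_nhdsWithin hT).mul_const x
  refine (tendsto_rescaled_ballWeight n hT hα x).congr' ?_
  filter_upwards [hTx.eventually_le_const one_pos] with i hi
  rw [indicator_of_mem (mem_Iic.2 hi)]

lemma eventually_norm_rescaled_indicator_Iic_ballWeight_le (n : ℕ) (hT : Tendsto T l (𝓝[>] 0))
    (hα : Tendsto (fun i => T i ^ 2 * α i) l (𝓝 c)) :
    ∀ᶠ i in l, ∀ x ∈ Ioi (0 : ℝ),
      ‖(T i ^ n)⁻¹ * (Iic (T i)).indicator (ballWeight n (α i)) (T i * x)‖ ≤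
        (Iic 1).indicator (fun _ => exp |c| + 1) x := by
  have hT_pos : ∀ᶠ i in l, 0 < T i := eventually_mem_of_tendsto_nhdsWithin hT
  have hT0 := tendsto_nhds_of_tendsto_nhdsWithin hT
  have hsup : Tendsto (fun i => (1 + -T i ^ 2) ^ (-|α i|)) l (𝓝 (exp |c|)) := by
    refine tendsto_one_add_rpow (by simpa using (hT0.pow 2).neg) (hα.abs.congr fun i => ?_)
    rw [abs_mul, abs_sq, neg_mul_neg]
  filter_upwards [hT_pos, hT0.eventually_lt_const one_pos,
    hsup.eventually_le_const (lt_add_one _)] with i hTi hTi_lt hsup_le x hx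
  by_cases hx1 : x ≤ 1
  · have hTx : T i * x ≤ T i := mul_le_of_le_one_right hTi.le hx1
    have hTx0 : 0 ≤ T i * x := (mul_pos hTi hx).le
    rw [indicator_of_mem (mem_Iic.2 hTx), indicator_of_mem (mem_Iic.2 hx1), norm_of_nonneg
      (mul_nonneg (by positivity) (ballWeight_nonneg n _ ⟨hTx0, hTx.trans hTi_lt.le⟩))]
    refine le_trans ?_ hsup_le
    rw [inv_mul_le_iff₀ (pow_pos hTi n), ← sub_eq_add_neg]
    exact ballWeight_le_of_le n (α i) hTx0 hTx hTi_lt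
  · have hTx : T i < T i * x := lt_mul_of_one_lt_right hTi (not_le.1 hx1)
    rw [indicator_of_notMem (notMem_Iic.2 hTx), indicator_of_notMem (notMem_Iic.2 (not_le.1 hx1)),
      mul_zero, norm_zero]

lemma eventually_norm_rescaled_indicator_Iic_one_ballWeight_le (n : ℕ) (hc : 0 < c)
    (hT : Tendsto T l (𝓝[>] 0)) (hα : Tendsto (fun i => T i ^ 2 * α i) l (𝓝 c)) :
    ∀ᶠ i in l, ∀ x ∈ Ioi (0 : ℝ),
      ‖(T i ^ n)⁻¹ * (Iic 1).indicator (ballWeight n (α i)) (T i * x)‖ ≤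
        gaussWeight n (-(c / 2)) x := by
  have hT_pos : ∀ᶠ i in l, 0 < T i := eventually_mem_of_tendsto_nhdsWithin hT
  filter_upwards [hT_pos, hα.eventually_const_le (half_lt_self hc)] with i hTi hα_ge x hx
  have hαi : 0 ≤ α i := (pos_of_mul_pos_right ((half_pos hc).trans_le hα_ge) (sq_nonneg _)).le
  by_cases hTx : T i * x ≤ 1
  · have hTx0 : 0 ≤ T i * x := (mul_pos hTi hx).le
    rw [indicator_of_mem (mem_Iic.2 hTx), norm_of_nonneg
      (mul_nonneg (by positivity) (ballWeight_nonneg n _ ⟨hTx0, hTx⟩))]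
    calc (T i ^ n)⁻¹ * ballWeight n (α i) (T i * x)
        ≤ (T i ^ n)⁻¹ * gaussWeight n (-α i) (T i * x) := by
          gcongr
          exact ballWeight_le_gaussWeight n hαi ⟨hTx0, hTx⟩
      _ = x ^ n * exp (-(T i ^ 2 * α i) * x ^ 2) := by
          rw [gaussWeight, mul_pow _ _ n,
            show -α i * (T i * x) ^ 2 = -(T i ^ 2 * α i) * x ^ 2 by ring]
          field_simp
      _ ≤ gaussWeight n (-(c / 2)) x := by
          have hx : 0 < x := hx
          unfold gaussWeight
          gcongr
  · rw [indicator_of_notMem (notMem_Iic.2 (not_le.1 hTx)), mul_zero, norm_zero]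
    exact (gaussWeight_pos n _ hx).le

lemma integral_indicator_Iic_one_gaussWeight_pos (n : ℕ) (c : ℝ) :
    0 < ∫ x in Ioi (0 : ℝ), (Iic 1).indicator (gaussWeight n c) x := by
  rw [integral_Ioi_indicator_Iic _ zero_le_one]
  exact intervalIntegral.intervalIntegral_pos_of_pos_on
    ((continuous_gaussWeight n c).intervalIntegrable 0 1)
    (fun x hx => gaussWeight_pos n c hx.1) one_pos

lemma tendsto_probLE_ballWeight [l.IsCountablyGenerated] {β : ι → ℝ} {b : ℝ} (m n : ℕ)
    (hc : 0 < c) (hT : Tendsto T l (𝓝[>] 0))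
    (hβ : Tendsto (fun i => T i ^ 2 * β i) l (𝓝 b))
    (hα : Tendsto (fun i => T i ^ 2 * α i) l (𝓝 c)) :
    Tendsto (fun i => probLE ((Iic (T i)).indicator (ballWeight m (β i)))
        ((Iic 1).indicator (ballWeight n (α i)))) l
      (𝓝 (probLE ((Iic 1).indicator (gaussWeight m (-b))) (gaussWeight n (-c)))) := by
  have hmeas (k : ℕ) (r s t : ℝ) : AEStronglyMeasurable
      (fun x => (r ^ k)⁻¹ * (Iic s).indicator (ballWeight k t) (r * x)) (volume.restrict (Ioi 0)) :=
    ((((measurable_ballWeight k t).indicator measurableSet_Iic).comp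
      (measurable_const_mul r)).const_mul _).aestronglyMeasurable
  have hlim := tendsto_probLE
    (.of_forall fun i => hmeas m (T i) (T i) (β i))
    (eventually_norm_rescaled_indicator_Iic_ballWeight_le m hT hβ)
    (integrableOn_Ioi_indicator_Iic.2 (integrableOn_const measure_Ioc_lt_top.ne))
    (fun x _ => tendsto_rescaled_indicator_Iic_ballWeight m hT hβ x)
    (.of_forall fun i => hmeas n (T i) 1 (α i))
    (eventually_norm_rescaled_indicator_Iic_one_ballWeight_le n hc hT hα)
    (integrableOn_gaussWeight n (neg_neg_of_pos (half_pos hc)))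
    (fun x _ => tendsto_rescaled_indicator_Iic_one_ballWeight n hT hα x)
    (integral_indicator_Iic_one_gaussWeight_pos m (-b)).ne'
    (setIntegral_Ioi_pos_of_pos_on_Ioo one_pos (integrableOn_gaussWeight n (neg_neg_of_pos hc))
      (fun x hx => (gaussWeight_pos n _ hx).le) fun x hx => gaussWeight_pos n _ hx.1).ne'
  have hT_pos : ∀ᶠ i in l, 0 < T i := eventually_mem_of_tendsto_nhdsWithin hT
  refine hlim.congr' ?_
  filter_upwards [hT_pos] with i hTi
  exact probLE_const_mul_comp_mul_left hTi (by positivity) (by positivity)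

end Convergence

section Curvature

lemma tendsto_zero_of_tendsto_mul_natCast {x : ℕ → ℝ} {c : ℝ}
    (h : Tendsto (fun n : ℕ => x n * (n : ℝ)) atTop (𝓝 c)) : Tendsto x atTop (𝓝 0) := by
  refine (h.div_atTop tendsto_natCast_atTop_atTop).congr' ?_
  filter_upwards [eventually_ne_atTop 0] with n hn
  exact mul_div_cancel_right₀ _ (Nat.cast_ne_zero.2 hn)

lemma tendsto_mul_natCast_add {x : ℕ → ℝ} {c : ℝ}
    (h : Tendsto (fun n : ℕ => x n * (n : ℝ)) atTop (𝓝 c)) (y : ℝ) :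
    Tendsto (fun n : ℕ => x n * ((n : ℝ) + y)) atTop (𝓝 c) := by
  simpa only [mul_add, zero_mul, add_zero] using
    h.add ((tendsto_zero_of_tendsto_mul_natCast h).mul_const y)

variable {ι : Type*} {l : Filter ι} {x b : ι → ℝ} {u c : ℝ}

lemma tendsto_tanh_sq_mul {t : ι → ℝ}
    (ht : Tendsto t l (𝓝 0)) (htb : Tendsto (fun i => t i ^ 2 * b i) l (𝓝 c)) :
    Tendsto (fun i => tanh (t i) ^ 2 * b i) l (𝓝 c) := by
  have htanh : HasDerivAt tanh 1 0 := by simpa using hasDerivAt_tanh 0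
  have honce := tendsto_apply_mul_of_hasDerivAt (b := fun i => t i * b i) htanh tanh_zero ht
    (by simpa only [pow_two, mul_assoc] using htb)
  have htwice := tendsto_apply_mul_of_hasDerivAt (b := fun i => tanh (t i) * b i) htanh tanh_zero ht
    (honce.congr fun i => by ring)
  simpa only [one_mul, pow_two, mul_assoc] using htwice

lemma tendsto_sqrt_mul_zero (u : ℝ) (hx : Tendsto x l (𝓝 0)) :
    Tendsto (fun i => √(x i) * u) l (𝓝 0) := by
  simpa using hx.sqrt.mul_const u

lemma tendsto_tanh_sqrt_mul_nhdsGT (hu : 0 < u) (hx_pos : ∀ᶠ i in l, 0 < x i)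
    (hx : Tendsto x l (𝓝 0)) : Tendsto (fun i => tanh (√(x i) * u)) l (𝓝[>] 0) := by
  refine tendsto_nhdsWithin_iff.2 ⟨?_, ?_⟩
  · rw [← tanh_zero]
    exact (hasDerivAt_tanh 0).continuousAt.tendsto.comp (tendsto_sqrt_mul_zero u hx)
  · filter_upwards [hx_pos] with i hi using tanh_pos (mul_pos (sqrt_pos.2 hi) hu)

lemma tendsto_tanh_sqrt_mul_sq_mul (u : ℝ) (hx_pos : ∀ᶠ i in l, 0 < x i)
    (hx : Tendsto x l (𝓝 0)) (hxb : Tendsto (fun i => x i * b i) l (𝓝 c)) :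
    Tendsto (fun i => tanh (√(x i) * u) ^ 2 * b i) l (𝓝 (u ^ 2 * c)) := by
  refine tendsto_tanh_sq_mul (tendsto_sqrt_mul_zero u hx) ((hxb.const_mul (u ^ 2)).congr' ?_)
  filter_upwards [hx_pos] with i hi
  rw [mul_pow, sq_sqrt hi.le]
  ring

end Curvature

/-- critical phase, `-K(d)·d → κ ∈ (0,∞)` implies the intersection probability
tends to the constant `ρ(u,q,γ,κ)`, which lies strictly between 0 and 1. -/
theorem phase_transition_critical (q γ : ℕ) (hq : 1 ≤ q) (hγ : γ ≤ q - 1) (u κ : ℝ)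
    (hu : 0 < u) (hκ : 0 < κ) (K : ℕ → ℝ) (hK : ∀ d : ℕ, 2 ≤ d → K d < 0)
    (h : Tendsto (fun d : ℕ => -K d * (d : ℝ)) atTop (nhds κ)) :
    Tendsto (fun d : ℕ => Pprob d q γ (K d) u) atTop (nhds (rhoConst u q γ κ)) ∧
      rhoConst u q γ κ ∈ Set.Ioo (0 : ℝ) 1 := by
  obtain ⟨a, rfl⟩ : ∃ a, q = γ + 1 + a := ⟨q - (γ + 1), by lia⟩
  have hc : 0 < u ^ 2 * κ / 2 := by positivity
  rw [rhoConst_eq_probLE a γ hu hκ]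
  refine ⟨?_, probLE_gaussWeight_mem_Ioo a γ _ hc⟩
  have hK_pos : ∀ᶠ d in atTop, 0 < -K d := by
    filter_upwards [eventually_ge_atTop 2] with d hd using neg_pos.2 (hK d hd)
  have hT := tendsto_tanh_sqrt_mul_nhdsGT hu hK_pos (tendsto_zero_of_tendsto_mul_natCast h)
  have hT_sq (y : ℝ) := tendsto_tanh_sqrt_mul_sq_mul u hK_pos
    (tendsto_zero_of_tendsto_mul_natCast h) (tendsto_mul_natCast_add h y)
  have hβ : Tendsto (fun d : ℕ => tanh (√(-K d) * u) ^ 2 * (-((d : ℝ) + 1) / 2)) atTop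
      (𝓝 (-(u ^ 2 * κ / 2))) := ((hT_sq 1).div_const 2).neg.congr fun d => by ring
  have hα : Tendsto (fun d : ℕ => tanh (√(-K d) * u) ^ 2 * (((d : ℝ) - (γ + 1 + a : ℕ)) / 2 - 1))
      atTop (𝓝 (u ^ 2 * κ / 2)) :=
    ((hT_sq (-(γ + 1 + a : ℕ) - 2)).div_const 2).congr fun d => by ring
  have hlim := tendsto_probLE_ballWeight a γ hc hT hβ hα
  rw [neg_neg] at hlim
  refine hlim.congr' ?_
  filter_upwards [eventually_gt_atTop (γ + 1 + a)] with d hd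
  exact (Pprob_eq_probLE a γ hd (hK d (by lia)) hu).symm
end

section
/- Fix integers q ≥ 1 and γ with 0 ≤ γ ≤ q-1, a real u > 0, and for each integer d ≥ 2 a real K(d) < 0 with lim_{d→∞} (-K(d))·d = 0. Then lim_{d→∞} C_{K(d)}(d, d-q+γ, u) = (ω_{q-γ}/(q-γ))·u^{q-γ}; that is, under the subcritical curvature regime the normalizing constant converges to its Euclidean value. -/
open Real MeasureTheory Filter Asymptotics

/-!
Write `s = √(-K)`, `m` for the dimension of the flats and `k + 1` for their codimension. After
distributing the factor `s ^ (-k)`, the integrand of `C_K` is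
`cosh (s r) ^ m * (sinh (s r) / (s r)) ^ k * r ^ k`. Since
`1 ≤ sinh y / y ≤ cosh y ≤ exp (y ^ 2 / 2)`, the integrand differs from the Euclidean one,
`r ^ k`, by at most `(exp ((m + k) s ^ 2 r ^ 2 / 2) - 1) |r| ^ k`. This error vanishes as
`s ^ 2 d = -K d → 0`.
-/

open scoped Topology

theorem abs_sinh_le_cosh_mul_abs (x : ℝ) : |sinh x| ≤ cosh x * |x| := by
  have abs_deriv_le (y : ℝ) (hy : y ∈ Set.uIcc 0 x) : ‖cosh y‖ ≤ cosh x := by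
    rw [norm_of_nonneg (cosh_pos y).le, cosh_le_cosh]
    simpa using Set.abs_sub_left_of_mem_uIcc hy
  simpa using (convex_uIcc 0 x).norm_image_sub_le_of_norm_hasDerivWithin_le
    (fun y _ => (hasDerivAt_sinh y).hasDerivWithinAt) abs_deriv_le Set.left_mem_uIcc
    Set.right_mem_uIcc

theorem sinh_div_self_le_cosh (x : ℝ) : sinh x / x ≤ cosh x :=
  calc sinh x / x ≤ |sinh x| / |x| := abs_div (sinh x) x ▸ le_abs_self _
    _ ≤ cosh x := div_le_of_le_mul₀ (abs_nonneg x) (cosh_pos x).le (abs_sinh_le_cosh_mul_abs x)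

theorem one_le_sinh_div_self {x : ℝ} (hx : x ≠ 0) : 1 ≤ sinh x / x := by
  rcases hx.lt_or_gt with hneg | hpos
  · rw [le_div_iff_of_neg hneg, one_mul, sinh_le_self_iff]
    exact hneg.le
  · rw [one_le_div hpos, self_le_sinh_iff]
    exact hpos.le

theorem cosh_pow_le_exp (n : ℕ) (x : ℝ) : cosh x ^ n ≤ exp (n * (x ^ 2 / 2)) := by
  rw [exp_nat_mul]
  exact pow_le_pow_left₀ (cosh_pos x).le (cosh_le_exp_half_sq x) n

theorem abs_cosh_pow_mul_sinh_div_self_pow_sub_one_le (m k : ℕ) {x : ℝ} (hx : x ≠ 0) :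
    |cosh x ^ m * (sinh x / x) ^ k - 1| ≤ exp ((m + k : ℕ) * (x ^ 2 / 2)) - 1 := by
  have one_le_ratio : 1 ≤ sinh x / x := one_le_sinh_div_self hx
  have one_le_prod : 1 ≤ cosh x ^ m * (sinh x / x) ^ k :=
    one_le_mul_of_one_le_of_one_le (one_le_pow₀ (one_le_cosh x)) (one_le_pow₀ one_le_ratio)
  rw [abs_of_nonneg (sub_nonneg.2 one_le_prod)]
  gcongr
  calc cosh x ^ m * (sinh x / x) ^ k ≤ cosh x ^ m * cosh x ^ k := by
        have := cosh_pos x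
        gcongr
        exact sinh_div_self_le_cosh x
    _ = cosh x ^ (m + k) := (pow_add _ _ _).symm
    _ ≤ exp ((m + k : ℕ) * (x ^ 2 / 2)) := cosh_pow_le_exp _ x

theorem abs_cosh_pow_mul_sinh_div_pow_sub_pow_le (m k : ℕ) {s : ℝ} (hs : s ≠ 0) (r : ℝ) :
    |cosh (s * r) ^ m * (sinh (s * r) / s) ^ k - r ^ k| ≤
      (exp ((m + k : ℕ) * ((s * r) ^ 2 / 2)) - 1) * |r| ^ k := by
  rcases eq_or_ne r 0 with rfl | hr
  · simp
  have factor_pow : cosh (s * r) ^ m * (sinh (s * r) / s) ^ k - r ^ k =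
      (cosh (s * r) ^ m * (sinh (s * r) / (s * r)) ^ k - 1) * r ^ k := by
    rw [sub_mul, mul_assoc, ← mul_pow, div_mul_eq_mul_div, mul_div_mul_right _ _ hr, one_mul]
  rw [factor_pow, abs_mul, abs_pow]
  gcongr
  exact abs_cosh_pow_mul_sinh_div_self_pow_sub_one_le m k (mul_ne_zero hs hr)

theorem abs_integral_cosh_pow_mul_sinh_div_pow_sub_le (m k : ℕ) {s : ℝ} (hs : s ≠ 0) (u : ℝ) :
    |(∫ r in (0 : ℝ)..u, cosh (s * r) ^ m * (sinh (s * r) / s) ^ k) - u ^ (k + 1) / (k + 1)| ≤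
      (exp ((m + k : ℕ) * ((s * u) ^ 2 / 2)) - 1) * |u| ^ (k + 1) := by
  have integral_euclidean : ∫ r in (0 : ℝ)..u, r ^ k = u ^ (k + 1) / (k + 1) := by
    simp [integral_pow]
  have abs_integrand_le (r : ℝ) (hr : r ∈ Set.uIoc 0 u) :
      ‖cosh (s * r) ^ m * (sinh (s * r) / s) ^ k - r ^ k‖ ≤
        (exp ((m + k : ℕ) * ((s * u) ^ 2 / 2)) - 1) * |u| ^ k := by
    have abs_le : |r| ≤ |u| := by
      simpa using Set.abs_sub_left_of_mem_uIcc (Set.uIoc_subset_uIcc hr)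
    have sq_le : (s * r) ^ 2 ≤ (s * u) ^ 2 := by
      rw [sq_le_sq, abs_mul, abs_mul]
      gcongr
    refine (abs_cosh_pow_mul_sinh_div_pow_sub_pow_le m k hs r).trans ?_
    have : 0 ≤ exp ((m + k : ℕ) * ((s * u) ^ 2 / 2)) - 1 :=
      sub_nonneg.2 (one_le_exp (by positivity))
    gcongr
  rw [← integral_euclidean, ← intervalIntegral.integral_sub
    (Continuous.intervalIntegrable (by fun_prop) _ _)
    (Continuous.intervalIntegrable (by fun_prop) _ _)]
  simpa [pow_succ, mul_assoc] using
    intervalIntegral.norm_integral_le_of_norm_le_const abs_integrand_le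

theorem Cconst_eq_integral_sinh_div_pow (K : ℝ) (m k : ℕ) (u : ℝ) :
    Cconst K (m + k + 1) m u =
      omegaS (k + 1) *
        ∫ r in (0 : ℝ)..u, cosh (√(-K) * r) ^ m * (sinh (√(-K) * r) / √(-K)) ^ k := by
  have codim_eq : m + k + 1 - m = k + 1 := by lia
  have exponent_eq : -((m + k + 1 : ℕ) : ℝ) + m + 1 = -(k : ℝ) := by push_cast; ring
  rw [Cconst, codim_eq, exponent_eq, rpow_neg (sqrt_nonneg _), rpow_natCast, mul_assoc,
    ← intervalIntegral.integral_const_mul, Nat.add_sub_cancel]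
  simp only [div_eq_inv_mul, mul_pow, inv_pow, mul_left_comm]

theorem abs_Cconst_sub_le {K : ℝ} (hK : K < 0) (m k : ℕ) (u : ℝ) :
    |Cconst K (m + k + 1) m u - omegaS (k + 1) * (u ^ (k + 1) / (k + 1))| ≤
      |omegaS (k + 1)| *
        ((exp (-K * (m + k + 1 : ℕ) * (u ^ 2 / 2)) - 1) * |u| ^ (k + 1)) := by
  have neg_K_pos : 0 < -K := neg_pos.2 hK
  have exponent_le : ((m + k : ℕ) : ℝ) * ((√(-K) * u) ^ 2 / 2) ≤
      -K * (m + k + 1 : ℕ) * (u ^ 2 / 2) :=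
    calc ((m + k : ℕ) : ℝ) * ((√(-K) * u) ^ 2 / 2) = -K * (m + k : ℕ) * (u ^ 2 / 2) := by
          rw [mul_pow, sq_sqrt neg_K_pos.le]
          ring
      _ ≤ -K * (m + k + 1 : ℕ) * (u ^ 2 / 2) := by
          gcongr -K * Nat.cast ?_ * _
          exact Nat.le_succ _
  rw [Cconst_eq_integral_sinh_div_pow, ← mul_sub, abs_mul]
  gcongr
  refine (abs_integral_cosh_pow_mul_sinh_div_pow_sub_le m k (sqrt_pos.2 neg_K_pos).ne' u).trans ?_
  gcongr

theorem Cconst_subcritical_limit_general {ι : Type*} {l : Filter ι} {K : ι → ℝ} {d m : ι → ℕ}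
    {n : ℕ} (hn : 1 ≤ n) (hd : ∀ᶠ i in l, d i = m i + n) (hK : ∀ᶠ i in l, K i < 0)
    (h : Tendsto (fun i => -K i * (d i : ℝ)) l (𝓝 0)) (u : ℝ) :
    Tendsto (fun i => Cconst (K i) (d i) (m i) u) l (𝓝 (omegaS n / n * u ^ n)) := by
  obtain ⟨k, rfl⟩ := Nat.exists_eq_add_of_le' hn
  have error_tendsto : Tendsto (fun i => |omegaS (k + 1)| *
      ((exp (-K i * d i * (u ^ 2 / 2)) - 1) * |u| ^ (k + 1))) l (𝓝 0) := by
    have exp_tendsto := (h.mul_const (u ^ 2 / 2)).rexp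
    simpa using ((exp_tendsto.sub_const 1).mul_const (|u| ^ (k + 1))).const_mul |omegaS (k + 1)|
  rw [tendsto_iff_dist_tendsto_zero]
  refine squeeze_zero' (.of_forall fun _ => dist_nonneg) ?_ error_tendsto
  filter_upwards [hd, hK] with i hdi hKi
  rw [hdi, Real.dist_eq, div_mul_eq_mul_div, mul_div_assoc, Nat.cast_succ]
  exact abs_Cconst_sub_le hKi (m i) k u

/-- in the subcritical regime the normalizing constant converges to its
Euclidean value. -/
theorem Cconst_subcritical_limit (q γ : ℕ) (hq : 1 ≤ q) (hγ : γ ≤ q - 1) (u : ℝ) (hu : 0 < u)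
    (K : ℕ → ℝ) (hK : ∀ d : ℕ, 2 ≤ d → K d < 0)
    (h : Tendsto (fun d : ℕ => -K d * (d : ℝ)) atTop (nhds 0)) :
    Tendsto (fun d : ℕ => Cconst (K d) d (d - q + γ) u) atTop
      (nhds (omegaS (q - γ) / ((q : ℝ) - (γ : ℝ)) * u ^ ((q : ℝ) - (γ : ℝ)))) := by
  rw [← Nat.cast_sub (by lia), rpow_natCast]
  exact Cconst_subcritical_limit_general (by lia)
    ((eventually_ge_atTop q).mono fun d hd => by lia) ((eventually_ge_atTop 2).mono hK) h u
end

section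
/- Fix integers q ≥ 1 and γ with 0 ≤ γ ≤ q-1, reals u > 0 and κ ∈ (0,∞), and for each integer d ≥ 2 a real K(d) < 0 with lim_{d→∞} (-K(d))·d = κ. Then lim_{d→∞} d^{(q-γ)/2} · ω_{q-γ} · ∫_0^{√(-K(d))·u} cosh^{d-q+γ}(s)·sinh^{q-γ-1}(s) ds = ω_{q-γ} · κ^{(q-γ)/2} · ∫_0^u e^{κ s²/2}·s^{q-γ-1} ds; i.e. C_{-1}(d, d-q+γ, √(-K(d))·u) is asymptotically equivalent to ω_{q-γ}·(∫_0^u e^{κ s²/2} s^{q-γ-1} ds)·κ^{(q-γ)/2}·d^{-(q-γ)/2} as d → ∞. -/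
open Real MeasureTheory Filter Asymptotics

/-!
With `a = √(-K d)` and the substitution `s = a r`, the integral becomes
`a ^ (k + 1) * ∫ r in 0..u, cosh (a r) ^ m * (sinh (a r) / a) ^ k`, where `k = q - γ - 1` and
`m = d - q + γ`. Here `a → 0` and `m a² → κ`; since `log (cosh x)` lies between
`x² / (2 cosh x)` and `x² / 2`, the integrand tends to `exp (κ r² / 2) * r ^ k`. Its absolute value
is largest at the endpoint `r = u`, where it converges, so dominated convergence applies. The
remaining factor is `d ^ ((k + 1) / 2) * a ^ (k + 1) = (a² d) ^ ((k + 1) / 2) → κ ^ ((k + 1) / 2)`.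
-/

open scoped Topology

lemma abs_le_abs_sinh (x : ℝ) : |x| ≤ |sinh x| := by
  rw [abs_sinh]
  exact self_le_sinh_iff.2 (abs_nonneg x)

lemma one_add_half_sq_le_cosh (x : ℝ) : 1 + x ^ 2 / 2 ≤ cosh x := by
  have cosh_eq : cosh x = 1 + 2 * sinh (x / 2) ^ 2 := by
    rw [← add_halves x, ← two_mul, cosh_two_mul, cosh_sq]
    ring_nf
  have sq_le : (x / 2) ^ 2 ≤ sinh (x / 2) ^ 2 := sq_le_sq.2 (abs_le_abs_sinh _)
  linarith

lemma log_cosh_le_half_sq (x : ℝ) : log (cosh x) ≤ x ^ 2 / 2 :=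
  (log_le_iff_le_exp (cosh_pos x)).2 (cosh_le_exp_half_sq x)

lemma half_sq_div_cosh_le_log_cosh (x : ℝ) : x ^ 2 / 2 / cosh x ≤ log (cosh x) :=
  calc x ^ 2 / 2 / cosh x ≤ (cosh x - 1) / cosh x := by
        gcongr
        linarith [one_add_half_sq_le_cosh x]
    _ = 1 - (cosh x)⁻¹ := by rw [sub_div, div_self (cosh_pos x).ne', one_div]
    _ ≤ log (cosh x) := one_sub_inv_le_log_of_pos (cosh_pos x)

section Limit

variable {ι : Type*} {l : Filter ι}

lemma tendsto_cosh_pow_exp {x : ι → ℝ} {m : ι → ℕ} {σ : ℝ} (hx : Tendsto x l (𝓝 0))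
    (hm : Tendsto (fun i => m i * x i ^ 2) l (𝓝 σ)) :
    Tendsto (fun i => cosh (x i) ^ m i) l (𝓝 (exp (σ / 2))) := by
  have upper_tendsto : Tendsto (fun i => m i * (x i ^ 2 / 2)) l (𝓝 (σ / 2)) := by
    simpa only [mul_div_assoc] using hm.div_const 2
  have cosh_tendsto : Tendsto (fun i => cosh (x i)) l (𝓝 1) :=
    cosh_zero ▸ (continuous_cosh.tendsto 0).comp hx
  have lower_tendsto : Tendsto (fun i => m i * (x i ^ 2 / 2 / cosh (x i))) l (𝓝 (σ / 2)) := by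
    simpa only [Pi.div_def, mul_div_assoc, div_one] using
      upper_tendsto.div cosh_tendsto one_ne_zero
  have log_tendsto : Tendsto (fun i => m i * log (cosh (x i))) l (𝓝 (σ / 2)) :=
    tendsto_of_tendsto_of_tendsto_of_le_of_le lower_tendsto upper_tendsto
      (fun i => mul_le_mul_of_nonneg_left (half_sq_div_cosh_le_log_cosh _) (m i).cast_nonneg)
      (fun i => mul_le_mul_of_nonneg_left (log_cosh_le_half_sq _) (m i).cast_nonneg)
  refine log_tendsto.rexp.congr fun i => ?_
  rw [exp_nat_mul, exp_log (cosh_pos _)]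

variable {a : ι → ℝ} {m : ι → ℕ} {κ : ℝ}

lemma tendsto_sinh_mul_div (ha : Tendsto a l (𝓝[≠] 0)) (r : ℝ) :
    Tendsto (fun i => sinh (a i * r) / a i) l (𝓝 r) := by
  have hasDerivAt : HasDerivAt (fun x : ℝ => sinh (x * r)) r 0 := by
    simpa using ((hasDerivAt_id (0 : ℝ)).mul_const r).sinh
  refine (hasDerivAt.tendsto_slope_zero.comp ha).congr fun i => ?_
  simp [div_eq_inv_mul]

lemma tendsto_cosh_pow_mul_sinh_div_pow (ha : Tendsto a l (𝓝[≠] 0))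
    (hm : Tendsto (fun i => m i * a i ^ 2) l (𝓝 κ)) (k : ℕ) (r : ℝ) :
    Tendsto (fun i => cosh (a i * r) ^ m i * (sinh (a i * r) / a i) ^ k) l
      (𝓝 (exp (κ * r ^ 2 / 2) * r ^ k)) := by
  have mul_tendsto_zero : Tendsto (fun i => a i * r) l (𝓝 0) := by
    simpa only [zero_mul] using (tendsto_nhds_of_tendsto_nhdsWithin ha).mul_const r
  have mul_sq_tendsto : Tendsto (fun i => m i * (a i * r) ^ 2) l (𝓝 (κ * r ^ 2)) := by
    simpa only [mul_pow, mul_assoc] using hm.mul_const (r ^ 2)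
  exact (tendsto_cosh_pow_exp mul_tendsto_zero mul_sq_tendsto).mul
    ((tendsto_sinh_mul_div ha r).pow k)

lemma abs_cosh_pow_mul_sinh_div_pow_le (a : ℝ) (m k : ℕ) {r u : ℝ} (hr : |r| ≤ |u|) :
    |cosh (a * r) ^ m * (sinh (a * r) / a) ^ k| ≤
      |cosh (a * u) ^ m * (sinh (a * u) / a) ^ k| := by
  have abs_mul_le : |a * r| ≤ |a * u| := by
    rw [abs_mul, abs_mul]
    gcongr
  have abs_cosh_le : |cosh (a * r)| ≤ |cosh (a * u)| := by
    simpa only [abs_of_pos (cosh_pos _)] using cosh_le_cosh.2 abs_mul_le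
  have abs_sinh_le : |sinh (a * r)| ≤ |sinh (a * u)| := by
    simpa only [abs_sinh] using sinh_le_sinh.2 abs_mul_le
  simp only [abs_mul _ (_ ^ k), abs_pow, abs_div]
  gcongr

lemma tendsto_integral_cosh_pow_mul_sinh_div_pow [l.IsCountablyGenerated]
    (ha : Tendsto a l (𝓝[≠] 0)) (hm : Tendsto (fun i => m i * a i ^ 2) l (𝓝 κ))
    (k : ℕ) (u : ℝ) :
    Tendsto (fun i => ∫ r in (0 : ℝ)..u, cosh (a i * r) ^ m i * (sinh (a i * r) / a i) ^ k) l
      (𝓝 (∫ r in (0 : ℝ)..u, exp (κ * r ^ 2 / 2) * r ^ k)) := by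
  have pointwise := tendsto_cosh_pow_mul_sinh_div_pow ha hm k
  refine intervalIntegral.tendsto_integral_filter_of_dominated_convergence
    (fun _ => |exp (κ * u ^ 2 / 2) * u ^ k| + 1) (.of_forall fun i => ?_) ?_
    intervalIntegrable_const (.of_forall fun r _ => pointwise r)
  · exact Continuous.aestronglyMeasurable (by fun_prop)
  · filter_upwards [(pointwise u).abs.eventually_le_const (lt_add_one _)] with i hi
    refine .of_forall fun r hr => (abs_cosh_pow_mul_sinh_div_pow_le _ _ _ ?_).trans hi
    simpa using Set.abs_sub_left_of_mem_uIcc (Set.uIoc_subset_uIcc hr)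

lemma integral_cosh_pow_mul_sinh_pow_div_pow {a : ℝ} (ha : a ≠ 0) (m k : ℕ) (u : ℝ) :
    (∫ s in (0 : ℝ)..a * u, cosh s ^ m * sinh s ^ k) / a ^ (k + 1) =
      ∫ r in (0 : ℝ)..u, cosh (a * r) ^ m * (sinh (a * r) / a) ^ k := by
  have substitution := intervalIntegral.mul_integral_comp_mul_left (a := 0) (b := u)
    (f := fun s => cosh s ^ m * sinh s ^ k) a
  rw [mul_zero] at substitution
  simp only [div_pow, ← mul_div_assoc, intervalIntegral.integral_div]
  rw [← substitution, pow_succ', mul_div_mul_left _ _ ha]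

theorem tendsto_integral_cosh_pow_mul_sinh_pow_div_pow [l.IsCountablyGenerated]
    (ha : Tendsto a l (𝓝[≠] 0)) (hm : Tendsto (fun i => m i * a i ^ 2) l (𝓝 κ))
    (k : ℕ) (u : ℝ) :
    Tendsto (fun i => (∫ s in (0 : ℝ)..a i * u, cosh s ^ m i * sinh s ^ k) / a i ^ (k + 1)) l
      (𝓝 (∫ s in (0 : ℝ)..u, exp (κ * s ^ 2 / 2) * s ^ k)) := by
  refine (tendsto_integral_cosh_pow_mul_sinh_div_pow ha hm k u).congr' ?_
  filter_upwards [(tendsto_nhdsWithin_iff.1 ha).2] with i hi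
  exact (integral_cosh_pow_mul_sinh_pow_div_pow hi _ _ _).symm

lemma mul_rpow_natCast_div_two {x y : ℝ} (hx : 0 ≤ x) (hy : 0 ≤ y) (n : ℕ) :
    (x * y) ^ ((n : ℝ) / 2) = √x ^ n * y ^ ((n : ℝ) / 2) := by
  rw [mul_rpow hx hy, rpow_div_two_eq_sqrt _ hx, rpow_natCast]

theorem tendsto_rpow_mul_integral_cosh_pow_mul_sinh_pow [l.IsCountablyGenerated]
    {t x : ι → ℝ} {ν : ℝ} (ht : Tendsto t l (𝓝[>] 0)) (hx : ∀ i, 0 ≤ x i)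
    (hxt : Tendsto (fun i => x i * t i) l (𝓝 ν)) (hm : Tendsto (fun i => m i * t i) l (𝓝 κ))
    (k : ℕ) (u : ℝ) :
    Tendsto (fun i => x i ^ (((k + 1 : ℕ) : ℝ) / 2) *
        ∫ s in (0 : ℝ)..√(t i) * u, cosh s ^ m i * sinh s ^ k) l
      (𝓝 (ν ^ (((k + 1 : ℕ) : ℝ) / 2) * ∫ s in (0 : ℝ)..u, exp (κ * s ^ 2 / 2) * s ^ k)) := by
  obtain ⟨t_tendsto, t_pos⟩ := tendsto_nhdsWithin_iff.1 ht
  have sqrt_tendsto : Tendsto (fun i => √(t i)) l (𝓝[≠] 0) :=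
    tendsto_nhdsWithin_iff.2
      ⟨sqrt_zero ▸ t_tendsto.sqrt, t_pos.mono fun i hi => (sqrt_pos.2 hi).ne'⟩
  have exponent_tendsto : Tendsto (fun i => m i * √(t i) ^ 2) l (𝓝 κ) := by
    refine hm.congr' ?_
    filter_upwards [t_pos] with i hi
    rw [sq_sqrt (le_of_lt hi)]
  have integral_tendsto :=
    tendsto_integral_cosh_pow_mul_sinh_pow_div_pow sqrt_tendsto exponent_tendsto k u
  have prefactor_tendsto := hxt.rpow_const (p := ((k + 1 : ℕ) : ℝ) / 2) (.inr (by positivity))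
  refine (prefactor_tendsto.mul integral_tendsto).congr' ?_
  filter_upwards [t_pos] with i hi
  rw [mul_comm (x i), mul_rpow_natCast_div_two (le_of_lt hi) (hx i)]
  have sqrt_ne_zero : √(t i) ≠ 0 := (sqrt_pos.2 hi).ne'
  field_simp

end Limit

lemma tendsto_natCast_sub_add_mul {f : ℕ → ℝ} {c : ℝ}
    (h : Tendsto (fun d : ℕ => d * f d) atTop (𝓝 c)) (p r : ℕ) :
    Tendsto (fun d : ℕ => ((d - p + r : ℕ) : ℝ) * f d) atTop (𝓝 c) := by
  have f_tendsto_zero := ProbabilityTheory.tendsto_zero_of_tendsto_mul_atTop h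
  have shift_tendsto := h.add (f_tendsto_zero.const_mul ((r : ℝ) - p))
  rw [mul_zero, add_zero] at shift_tendsto
  refine shift_tendsto.congr' ?_
  filter_upwards [eventually_ge_atTop p] with d hd
  push_cast [hd]
  ring

/-- asymptotics of `C_{-1}(d, d-q+γ, √(-K(d))·u)` in the critical regime. -/
theorem Cconst_critical_asymptotics (q γ : ℕ) (hq : 1 ≤ q) (hγ : γ ≤ q - 1) (u κ : ℝ)
    (hu : 0 < u) (hκ : 0 < κ) (K : ℕ → ℝ) (hK : ∀ d : ℕ, 2 ≤ d → K d < 0)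
    (h : Tendsto (fun d : ℕ => -K d * (d : ℝ)) atTop (nhds κ)) :
    Tendsto (fun d : ℕ => (d : ℝ) ^ (((q : ℝ) - (γ : ℝ)) / 2) * omegaS (q - γ) *
        ∫ s in (0:ℝ)..(Real.sqrt (-K d) * u),
          Real.cosh s ^ (d - q + γ) * Real.sinh s ^ (q - γ - 1))
      atTop
      (nhds (omegaS (q - γ) * κ ^ (((q : ℝ) - (γ : ℝ)) / 2) *
        ∫ s in (0:ℝ)..u, Real.exp (κ * s ^ 2 / 2) * s ^ ((q : ℝ) - (γ : ℝ) - 1))) := by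
  obtain ⟨k, rfl⟩ : ∃ k, q = γ + (k + 1) := ⟨q - γ - 1, by omega⟩
  have codim_cast : ((γ + (k + 1) : ℕ) : ℝ) - γ = (k + 1 : ℕ) := by push_cast; ring
  have codim_sub_one_cast : ((k + 1 : ℕ) : ℝ) - 1 = k := by push_cast; ring
  have mul_neg_K_tendsto : Tendsto (fun d : ℕ => d * -K d) atTop (𝓝 κ) := by
    simpa only [mul_comm] using h
  have neg_K_tendsto : Tendsto (fun d => -K d) atTop (𝓝[>] 0) := by
    refine tendsto_nhdsWithin_iff.2
      ⟨ProbabilityTheory.tendsto_zero_of_tendsto_mul_atTop mul_neg_K_tendsto, ?_⟩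
    filter_upwards [eventually_ge_atTop 2] with d hd using neg_pos.2 (hK d hd)
  have integral_tendsto := tendsto_rpow_mul_integral_cosh_pow_mul_sinh_pow neg_K_tendsto
    (fun d => d.cast_nonneg) mul_neg_K_tendsto
    (tendsto_natCast_sub_add_mul mul_neg_K_tendsto (γ + (k + 1)) γ) k u
  simp only [codim_cast, codim_sub_one_cast, rpow_natCast, Nat.add_sub_cancel_left,
    Nat.add_sub_cancel]
  simpa only [mul_assoc, mul_left_comm (omegaS _)] using integral_tendsto.const_mul (omegaS (k + 1))
end

section
/- Fix an integer q ≥ 1, an integer γ ≥ 0, and a real v > 0. Then lim_{d→∞} d^{(γ+1)/2} · ∫_0^{1/v} s^γ · (1 - s²v²)^{(d-q)/2 - 1} ds = Γ((γ+1)/2) · 2^{(γ-1)/2} · v^{-γ-1} (a Laplace-method asymptotic for the integral appearing in the subcritical phase). -/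
open Real MeasureTheory Filter Asymptotics

/-!
Put `a = (d - q) / 2 - 1`. Scaling by `v` moves the integral to `[0, 1]`, and the substitution
`x = t / √a` turns `a ^ ((γ + 1) / 2) * ∫ x in 0..1, x ^ γ * (1 - x ^ 2) ^ a` into the integral of
`t ^ γ * (1 - t ^ 2 / a) ^ a` over `[0, √a]`. Since `(1 - y / a) ^ a` is at most `exp (-y)` and
tends to it as `a → ∞`, dominated convergence gives the limit `∫ t in Ioi 0, t ^ γ * exp (-t ^ 2)`,
a Gamma integral. Finally `d / a → 2` converts powers of `a` into powers of `d`.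
-/

open Set Topology

theorem one_sub_div_rpow_le_exp_neg {a y : ℝ} (ha : 0 < a) (hy : y ≤ a) :
    (1 - y / a) ^ a ≤ exp (-y) := by
  have base_nonneg : 0 ≤ 1 - y / a := sub_nonneg.2 ((div_le_one ha).2 hy)
  calc (1 - y / a) ^ a ≤ exp (-(y / a)) ^ a :=
        rpow_le_rpow base_nonneg (one_sub_le_exp_neg _) ha.le
    _ = exp (-y) := by rw [← exp_mul, neg_mul, div_mul_cancel₀ y ha.ne']

theorem rpow_smul_integral_rpow_smul_comp_mul_left {E : Type*} [NormedAddCommGroup E]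
    [NormedSpace ℝ E] (p : ℝ) {b c : ℝ} (hb : 0 ≤ b) (hc : 0 < c) (f : ℝ → E) :
    c ^ (p + 1) • ∫ x in (0 : ℝ)..b, x ^ p • f (c * x) = ∫ t in (0 : ℝ)..c * b, t ^ p • f t := by
  calc c ^ (p + 1) • ∫ x in (0 : ℝ)..b, x ^ p • f (c * x)
      = c • ∫ x in (0 : ℝ)..b, (c * x) ^ p • f (c * x) := by
        rw [rpow_add_one hc.ne', mul_comm, mul_smul, ← intervalIntegral.integral_smul]
        congr 1
        refine intervalIntegral.integral_congr fun x hx => ?_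
        rw [uIcc_of_le hb] at hx
        simp only [mul_rpow hc.le hx.1, mul_smul]
    _ = ∫ t in (0 : ℝ)..c * b, t ^ p • f t := by
        rw [intervalIntegral.smul_integral_comp_mul_left (fun t => t ^ p • f t), mul_zero]

section Truncation

variable {p r : ℝ}

/-- The approximation `t ^ p * (1 - t ^ r / a) ^ a` of `t ^ p * exp (-t ^ r)`, obtained from
`x ^ p * (1 - x ^ r) ^ a` by the substitution `x = t / a ^ r⁻¹`. It is set to zero beyond the image
`a ^ r⁻¹` of `x = 1`, so that all `a` share the domain of integration `(0, ∞)`. -/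
noncomputable def truncatedKernel (p r a : ℝ) : ℝ → ℝ :=
  (Iic (a ^ r⁻¹)).indicator fun t => t ^ p * (1 - t ^ r / a) ^ a

theorem integral_truncatedKernel (p r : ℝ) {a : ℝ} (ha : 0 ≤ a) :
    ∫ t in Ioi 0, truncatedKernel p r a t =
      ∫ t in (0 : ℝ)..a ^ r⁻¹, t ^ p * (1 - t ^ r / a) ^ a := by
  rw [truncatedKernel, setIntegral_indicator measurableSet_Iic, Ioi_inter_Iic,
    ← intervalIntegral.integral_of_le (rpow_nonneg ha _)]

theorem measurable_truncatedKernel (p r a : ℝ) : Measurable (truncatedKernel p r a) :=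
  Measurable.indicator (by fun_prop) measurableSet_Iic

theorem norm_truncatedKernel_le (p : ℝ) {a t : ℝ} (hr : 0 < r) (ha : 0 < a) (ht : 0 ≤ t) :
    ‖truncatedKernel p r a t‖ ≤ t ^ p * exp (-t ^ r) := by
  by_cases htc : t ∈ Iic (a ^ r⁻¹)
  · have hta : t ^ r ≤ a := (le_rpow_inv_iff_of_pos ht ha.le hr).1 htc
    have base_nonneg : 0 ≤ 1 - t ^ r / a := sub_nonneg.2 ((div_le_one ha).2 hta)
    rw [truncatedKernel, indicator_of_mem htc, norm_of_nonneg (by positivity)]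
    gcongr
    exact one_sub_div_rpow_le_exp_neg ha hta
  · rw [truncatedKernel, indicator_of_notMem htc, norm_zero]
    positivity

theorem tendsto_truncatedKernel (p : ℝ) (hr : 0 < r) (t : ℝ) :
    Tendsto (fun a => truncatedKernel p r a t) atTop (𝓝 (t ^ p * exp (-t ^ r))) := by
  have untruncated : Tendsto (fun a : ℝ => t ^ p * (1 - t ^ r / a) ^ a) atTop
      (𝓝 (t ^ p * exp (-t ^ r))) := by
    simpa only [neg_div, ← sub_eq_add_neg] using
      (tendsto_one_add_div_rpow_exp (-t ^ r)).const_mul (t ^ p)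
  refine untruncated.congr' ?_
  filter_upwards [(tendsto_rpow_atTop (inv_pos.2 hr)).eventually_ge_atTop t] with a hta
  rw [truncatedKernel, indicator_of_mem (mem_Iic.2 hta)]

theorem tendsto_integral_truncatedKernel (hp : -1 < p) (hr : 0 < r) :
    Tendsto (fun a => ∫ t in Ioi 0, truncatedKernel p r a t) atTop
      (𝓝 (1 / r * Gamma ((p + 1) / r))) := by
  rw [← integral_rpow_mul_exp_neg_rpow hr hp]
  refine tendsto_integral_filter_of_dominated_convergence (fun t => t ^ p * exp (-t ^ r))
    (.of_forall fun a => (measurable_truncatedKernel p r a).aestronglyMeasurable) ?_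
    (integrableOn_rpow_mul_exp_neg_rpow hp hr)
    (.of_forall (tendsto_truncatedKernel p hr))
  filter_upwards [eventually_gt_atTop 0] with a ha
  filter_upwards [ae_restrict_mem measurableSet_Ioi] with t ht
  exact norm_truncatedKernel_le p hr ha (mem_Ioi.1 ht).le

end Truncation

theorem tendsto_rpow_mul_integral_rpow_mul_one_sub_rpow {p r : ℝ} (hp : -1 < p) (hr : 0 < r) :
    Tendsto (fun a : ℝ => a ^ ((p + 1) / r) * ∫ x in (0 : ℝ)..1, x ^ p * (1 - x ^ r) ^ a) atTop
      (𝓝 (1 / r * Gamma ((p + 1) / r))) := by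
  refine (tendsto_integral_truncatedKernel hp hr).congr' ?_
  filter_upwards [eventually_gt_atTop 0] with a ha
  have rescaled := rpow_smul_integral_rpow_smul_comp_mul_left p zero_le_one (rpow_pos_of_pos ha r⁻¹)
    fun t => (1 - t ^ r / a) ^ a
  simp only [smul_eq_mul, mul_one, ← rpow_mul ha.le, inv_mul_eq_div] at rescaled
  rw [integral_truncatedKernel p r ha.le, ← rescaled]
  congr 1
  refine intervalIntegral.integral_congr fun x hx => ?_
  rw [uIcc_of_le zero_le_one] at hx
  simp only [mul_rpow (rpow_nonneg ha.le r⁻¹) hx.1, rpow_inv_rpow ha.le hr.ne',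
    mul_div_cancel_left₀ _ ha.ne']

theorem integral_rpow_mul_one_sub_pow_mul_pow (p a : ℝ) (n : ℕ) {v : ℝ} (hv : 0 < v) :
    ∫ s in (0 : ℝ)..1 / v, s ^ p * (1 - s ^ n * v ^ n) ^ a =
      v ^ (-p - 1) * ∫ x in (0 : ℝ)..1, x ^ p * (1 - x ^ n) ^ a := by
  have rescaled := rpow_smul_integral_rpow_smul_comp_mul_left p (one_div_nonneg.2 hv.le) hv
    fun x => (1 - x ^ n) ^ a
  simp only [smul_eq_mul, mul_one_div_cancel hv.ne'] at rescaled
  rw [← rescaled, ← mul_assoc, ← rpow_add hv]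
  simp [mul_pow, mul_comm]

theorem tendsto_div_mul_add_atTop {k : ℝ} (hk : k ≠ 0) (c : ℝ) :
    Tendsto (fun x : ℝ => x / (k * x + c)) atTop (𝓝 k⁻¹) := by
  have reciprocal : Tendsto (fun x : ℝ => k + c / x) atTop (𝓝 k) := by
    simpa only [add_zero, id] using (tendsto_id.const_div_atTop c).const_add k
  refine (reciprocal.inv₀ hk).congr' ?_
  filter_upwards [eventually_ne_atTop 0] with x hx
  rw [← inv_div (k * x + c) x, add_div, mul_div_cancel_right₀ k hx]

theorem laplace_asymptotics_general {p v : ℝ} (hp : -1 < p) (q : ℝ) (hv : 0 < v) :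
    Tendsto (fun d : ℝ => d ^ ((p + 1) / 2) *
        ∫ s in (0 : ℝ)..1 / v, s ^ p * (1 - s ^ 2 * v ^ 2) ^ ((d - q) / 2 - 1))
      atTop (𝓝 (Gamma ((p + 1) / 2) * 2 ^ ((p - 1) / 2) * v ^ (-p - 1))) := by
  have exponent_tendsto : Tendsto (fun d : ℝ => (d - q) / 2 - 1) atTop atTop :=
    tendsto_atTop_add_const_right _ _
      ((tendsto_atTop_add_const_right _ _ tendsto_id).atTop_div_const two_pos)
  have ratio_tendsto : Tendsto (fun d : ℝ => d / ((d - q) / 2 - 1)) atTop (𝓝 2) := by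
    convert! tendsto_div_mul_add_atTop (inv_ne_zero two_ne_zero) (-q / 2 - 1) using 2
    · ring
    · rw [inv_inv]
  have unit_interval := (tendsto_rpow_mul_integral_rpow_mul_one_sub_rpow hp two_pos).comp
    exponent_tendsto
  have limit_eq : 2 ^ ((p + 1) / 2) * (1 / 2 * Gamma ((p + 1) / 2)) * v ^ (-p - 1) =
      Gamma ((p + 1) / 2) * 2 ^ ((p - 1) / 2) * v ^ (-p - 1) := by
    rw [show (p + 1) / 2 = (p - 1) / 2 + 1 by ring, rpow_add_one two_ne_zero]
    ring
  rw [← limit_eq]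
  refine (((ratio_tendsto.rpow_const (.inl two_ne_zero)).mul unit_interval).mul_const _).congr' ?_
  filter_upwards [eventually_gt_atTop 0, exponent_tendsto.eventually_gt_atTop 0] with d hd ha
  rw [integral_rpow_mul_one_sub_pow_mul_pow p _ 2 hv, div_rpow hd.le ha.le]
  simp only [Function.comp_apply, rpow_two]
  generalize (d - q) / 2 - 1 = a at ha ⊢
  field_simp

/-- a Laplace-method asymptotic for the integral appearing in the subcritical
phase. -/
theorem laplace_asymptotics (q γ : ℕ) (hq : 1 ≤ q) (v : ℝ) (hv : 0 < v) :
    Tendsto (fun d : ℕ => (d : ℝ) ^ (((γ : ℝ) + 1) / 2) *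
        ∫ s in (0:ℝ)..(1 / v), s ^ γ * (1 - s ^ 2 * v ^ 2) ^ (((d : ℝ) - (q : ℝ)) / 2 - 1))
      atTop
      (nhds (Real.Gamma (((γ : ℝ) + 1) / 2) * (2 : ℝ) ^ (((γ : ℝ) - 1) / 2) *
        v ^ (-(γ : ℝ) - 1))) := by
  have hγ : (-1 : ℝ) < γ := by linarith [γ.cast_nonneg (α := ℝ)]
  simpa only [rpow_natCast] using!
    (laplace_asymptotics_general hγ q hv).comp tendsto_natCast_atTop_atTop
end
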